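/- Let G be a countable infinite discrete group such that for every standard probability space (X₀, μ₀) the Bernoulli shift G ↷ (X₀^G, μ₀^G) is 𝕋-cocycle superrigid (G ∈ 𝒢). Consider the Bernoulli shift G ↷ (𝕋^G, ν^G), where ν is the Haar measure on 𝕋. If the natural map Ψ₂ : H²(G, 𝕋) → H²(G ↷ 𝕋^G; 𝕋) is surjective (i.e., H²(G ↷ 𝕋^G; 𝕋) = H²(G, 𝕋)), then H²(G, ℤG) = 0. -/

import Mathlib

open MeasureTheory

noncomputable section

namespace AlgActCohomology

/-- The Borel σ-algebra on the circle group `𝕋 = {z ∈ ℂ : |z| = 1}`. -/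
noncomputable instance : MeasurableSpace Circle := borel Circle
instance : BorelSpace Circle := ⟨rfl⟩

variable {G X : Type*}

/-- The diagonal action on a product. -/
def diag (a : G → X → X) : G → X × X → X × X := fun g p => (a g p.1, a g p.2)

/-- An action is ergodic if every measurable set invariant under every group element
has measure 0 or 1. -/
def IsErgodicAction [MeasurableSpace X] (a : G → X → X) (μ : Measure X) : Prop :=
  ∀ s : Set X, MeasurableSet s → (∀ g : G, a g ⁻¹' s = s) → μ s = 0 ∨ μ s = 1

/-- An action is weakly mixing if the diagonal action on the square
(with the product measure) is ergodic. -/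
def IsWeaklyMixing [MeasurableSpace X] (a : G → X → X) (μ : Measure X) : Prop :=
  IsErgodicAction (diag a) (μ.prod μ)

/-- A (p.m.p.) group action: `a : G → X → X` is an action of `G` and every `a g`
is measure preserving. -/
structure IsPmpAction [Group G] [MeasurableSpace X] (a : G → X → X) (μ : Measure X) :
    Prop where
  act_one : ∀ x, a 1 x = x
  act_mul : ∀ g h x, a (g * h) x = a g (a h x)
  measurePreserving : ∀ g, MeasurePreserving (a g) μ μ

/-- An algebraic action: an action of `G` by continuous (automatically bijective)
additive automorphisms of a compact abelian group `X`. -/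
structure IsAlgebraicAction [Group G] [AddCommGroup X] [TopologicalSpace X]
    (a : G → X → X) : Prop where
  act_one : ∀ x, a 1 x = x
  act_mul : ∀ g h x, a (g * h) x = a g (a h x)
  continuous : ∀ g, Continuous (a g)
  act_add : ∀ g x y, a g (x + y) = a g x + a g y

/-- A measurable `𝕋`-valued 1-cocycle for an action. -/
def IsCocycle1 [Group G] [MeasurableSpace X] (a : G → X → X) (μ : Measure X)
    (c : G → X → Circle) : Prop :=
  (∀ g, Measurable (c g)) ∧ ∀ g h : G, ∀ᵐ x ∂μ, c (g * h) x = c g x * c h (a g⁻¹ x)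

/-- An action is `𝕋`-cocycle superrigid if every measurable `𝕋`-valued 1-cocycle is
cohomologous to a group homomorphism `G → 𝕋`. -/
def IsCocycleSuperrigid [Group G] [MeasurableSpace X] (a : G → X → X) (μ : Measure X) :
    Prop :=
  ∀ c : G → X → Circle, IsCocycle1 a μ c →
    ∃ (lam : G →* Circle) (b : X → Circle), Measurable b ∧
      ∀ g : G, ∀ᵐ x ∂μ, c g x = lam g * (b (a g⁻¹ x) * (b x)⁻¹)

section Char

variable (X) [AddCommGroup X] [TopologicalSpace X]

/-- The Pontryagin dual `X̂` of a compact abelian group `X`: the group of continuous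
characters `X → 𝕋`, as a subgroup of the group of all functions `X → 𝕋`. -/
def charGroup : Subgroup (X → Circle) where
  carrier := {χ | Continuous χ ∧ ∀ x y, χ (x + y) = χ x * χ y}
  one_mem' := ⟨continuous_const, fun _ _ => (one_mul 1).symm⟩
  mul_mem' := fun h1 h2 => ⟨h1.1.mul h2.1, fun x y => by
    simp only [Pi.mul_apply, h1.2 x y, h2.2 x y]; exact mul_mul_mul_comm _ _ _ _⟩
  inv_mem' := fun h => ⟨h.1.inv, fun x y => by
    simp only [Pi.inv_apply, h.2 x y, mul_inv]⟩

end Char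

section Degree1

variable [Group G] [AddCommGroup X] [TopologicalSpace X]

/-- `Z¹(G, X̂)`: 1-cocycles of `G` with coefficients in the dual module `X̂`,
where `(g • χ) x = χ (a g⁻¹ x)`. -/
def modZ1 (a : G → X → X) : Subgroup (G → charGroup X) where
  carrier := {c | ∀ (g h : G) (x : X),
    ((c (g * h) : X → Circle)) x = (c h : X → Circle) (a g⁻¹ x) * (c g : X → Circle) x}
  one_mem' := by
    intro g h x
    simp
  mul_mem' := by
    intro c₁ c₂ h1 h2 g h x
    simp only [Pi.mul_apply, Subgroup.coe_mul]
    rw [h1 g h x, h2 g h x]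
    ac_rfl
  inv_mem' := by
    intro c hc g h x
    simp only [Pi.inv_apply, InvMemClass.coe_inv]
    rw [hc g h x, mul_inv]

/-- `B¹(G, X̂)`: 1-coboundaries. -/
def modB1 (a : G → X → X) : Subgroup (G → charGroup X) where
  carrier := {c | ∃ χ : charGroup X, ∀ (g : G) (x : X),
    (c g : X → Circle) x = (χ : X → Circle) (a g⁻¹ x) * ((χ : X → Circle) x)⁻¹}
  one_mem' := ⟨1, by intro g x; simp⟩
  mul_mem' := by
    rintro c₁ c₂ ⟨χ₁, h1⟩ ⟨χ₂, h2⟩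
    refine ⟨χ₁ * χ₂, fun g x => ?_⟩
    simp only [Pi.mul_apply, Subgroup.coe_mul]
    rw [h1 g x, h2 g x, mul_inv]
    ac_rfl
  inv_mem' := by
    rintro c ⟨χ, h⟩
    refine ⟨χ⁻¹, fun g x => ?_⟩
    simp only [Pi.inv_apply, InvMemClass.coe_inv]
    rw [h g x, mul_inv, inv_inv]

variable [MeasurableSpace X]

/-- Measurable `𝕋`-valued 1-cocycles for an action, as a subgroup of all maps
`G → X → 𝕋`. -/
def measZ1 (a : G → X → X) (μ : Measure X) : Subgroup (G → X → Circle) where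
  carrier := {c | (∀ g, Measurable (c g)) ∧
    ∀ g h : G, ∀ᵐ x ∂μ, c (g * h) x = c g x * c h (a g⁻¹ x)}
  one_mem' := ⟨fun _ => measurable_const, fun g h => ae_of_all _ fun x => by simp⟩
  mul_mem' := by
    rintro c₁ c₂ ⟨m1, h1⟩ ⟨m2, h2⟩
    refine ⟨fun g => (m1 g).mul (m2 g), fun g h => ?_⟩
    filter_upwards [h1 g h, h2 g h] with x e1 e2
    simp only [Pi.mul_apply]
    rw [e1, e2]
    ac_rfl
  inv_mem' := by
    rintro c ⟨m, hc⟩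
    refine ⟨fun g => (m g).inv, fun g h => ?_⟩
    filter_upwards [hc g h] with x e
    simp only [Pi.inv_apply]
    rw [e, mul_inv]

/-- The subgroup of measurable 1-cocycles that are cohomologous to (the cocycle
induced by) a group homomorphism `G → 𝕋`; this is the preimage in `Z¹(G ↷ X; 𝕋)` of
the subgroup `Ψ₁(H¹(G, 𝕋))` of `H¹(G ↷ X; 𝕋)`, so that
`H¹(G ↷ X; 𝕋)/Ψ₁(H¹(G, 𝕋)) = measZ1 ⧸ measBPsi1`. -/
def measBPsi1 (a : G → X → X) (μ : Measure X) : Subgroup (G → X → Circle) where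
  carrier := {c | ∃ (φ : G →* Circle) (b : X → Circle), Measurable b ∧
    ∀ g : G, ∀ᵐ x ∂μ, c g x = φ g * (b (a g⁻¹ x) * (b x)⁻¹)}
  one_mem' := ⟨1, 1, measurable_const, fun g => ae_of_all _ fun x => by simp⟩
  mul_mem' := by
    rintro c₁ c₂ ⟨φ₁, b₁, hb₁, h1⟩ ⟨φ₂, b₂, hb₂, h2⟩
    refine ⟨φ₁ * φ₂, b₁ * b₂, hb₁.mul hb₂, fun g => ?_⟩
    filter_upwards [h1 g, h2 g] with x e1 e2
    simp only [Pi.mul_apply, MonoidHom.mul_apply]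
    rw [e1, e2, mul_inv]
    ac_rfl
  inv_mem' := by
    rintro c ⟨φ, b, hb, h⟩
    refine ⟨φ⁻¹, b⁻¹, hb.inv, fun g => ?_⟩
    filter_upwards [h g] with x e
    simp only [Pi.inv_apply, MonoidHom.inv_apply]
    rw [e, mul_inv, mul_inv, inv_inv]

/-- The measurable cocycle induced by a module cocycle: evaluation of characters. -/
def ind1 (c : G → charGroup X) : G → X → Circle := fun g => (c g : X → Circle)

end Degree1

section Degree2

variable [Group G]

/-- A `𝕋`-valued 2-cocycle of the group `G` (for the trivial `G`-module `𝕋`). -/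
def IsGrpCocycle2 (θ : G → G → Circle) : Prop :=
  ∀ g₁ g₂ g₃ : G, θ g₂ g₃ * (θ (g₁ * g₂) g₃)⁻¹ * θ g₁ (g₂ * g₃) * (θ g₁ g₂)⁻¹ = 1

private lemma mul4 {M : Type*} [CommGroup M] {a₁ b₁ c₁ d₁ a₂ b₂ c₂ d₂ : M}
    (h₁ : a₁ * b₁⁻¹ * c₁ * d₁⁻¹ = 1) (h₂ : a₂ * b₂⁻¹ * c₂ * d₂⁻¹ = 1) :
    (a₁ * a₂) * (b₁ * b₂)⁻¹ * (c₁ * c₂) * (d₁ * d₂)⁻¹ = 1 := by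
  have e : (a₁ * a₂) * (b₁ * b₂)⁻¹ * (c₁ * c₂) * (d₁ * d₂)⁻¹
      = (a₁ * b₁⁻¹ * c₁ * d₁⁻¹) * (a₂ * b₂⁻¹ * c₂ * d₂⁻¹) := by
    simp only [mul_inv]; ac_rfl
  rw [e, h₁, h₂, one_mul]

private lemma inv4 {M : Type*} [CommGroup M] {a b c d : M}
    (h : a * b⁻¹ * c * d⁻¹ = 1) : a⁻¹ * b * c⁻¹ * d = 1 := by
  have e : a⁻¹ * b * c⁻¹ * d = (a * b⁻¹ * c * d⁻¹)⁻¹ := by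
    simp only [mul_inv, inv_inv]; try ac_rfl
  rw [e, h, inv_one]

variable [AddCommGroup X] [TopologicalSpace X]

/-- `Z²(G, X̂)`: 2-cocycles of `G` with coefficients in the dual module `X̂`. -/
def modZ2 (a : G → X → X) : Subgroup (G → G → charGroup X) where
  carrier := {c | ∀ (g₁ g₂ g₃ : G) (x : X),
    (c g₂ g₃ : X → Circle) (a g₁⁻¹ x) * ((c (g₁ * g₂) g₃ : X → Circle) x)⁻¹ *
      (c g₁ (g₂ * g₃) : X → Circle) x * ((c g₁ g₂ : X → Circle) x)⁻¹ = 1}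
  one_mem' := by intro g₁ g₂ g₃ x; simp
  mul_mem' := by
    intro c₁ c₂ h1 h2 g₁ g₂ g₃ x
    simp only [Pi.mul_apply, Subgroup.coe_mul]
    exact mul4 (h1 g₁ g₂ g₃ x) (h2 g₁ g₂ g₃ x)
  inv_mem' := by
    intro c hc g₁ g₂ g₃ x
    simp only [Pi.inv_apply, InvMemClass.coe_inv, inv_inv]
    exact inv4 (hc g₁ g₂ g₃ x)

/-- `B²(G, X̂)`: 2-coboundaries. -/
def modB2 (a : G → X → X) : Subgroup (G → G → charGroup X) where
  carrier := {c | ∃ b : G → charGroup X, ∀ (g h : G) (x : X),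
    (c g h : X → Circle) x =
      (b h : X → Circle) (a g⁻¹ x) * ((b (g * h) : X → Circle) x)⁻¹ * (b g : X → Circle) x}
  one_mem' := ⟨1, by intro g h x; simp⟩
  mul_mem' := by
    rintro c₁ c₂ ⟨b₁, h1⟩ ⟨b₂, h2⟩
    refine ⟨b₁ * b₂, fun g h x => ?_⟩
    simp only [Pi.mul_apply, Subgroup.coe_mul]
    rw [h1 g h x, h2 g h x, mul_inv]
    try ac_rfl
  inv_mem' := by
    rintro c ⟨b, hb⟩
    refine ⟨b⁻¹, fun g h x => ?_⟩
    simp only [Pi.inv_apply, InvMemClass.coe_inv]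
    rw [hb g h x]
    simp only [mul_inv, inv_inv]
    try ac_rfl

variable [MeasurableSpace X]

/-- Measurable `𝕋`-valued 2-cocycles for an action. -/
def measZ2 (a : G → X → X) (μ : Measure X) : Subgroup (G → G → X → Circle) where
  carrier := {c | (∀ g h, Measurable (c g h)) ∧
    ∀ g₁ g₂ g₃ : G, ∀ᵐ x ∂μ,
      c g₂ g₃ (a g₁⁻¹ x) * (c (g₁ * g₂) g₃ x)⁻¹ * c g₁ (g₂ * g₃) x * (c g₁ g₂ x)⁻¹ = 1}
  one_mem' := ⟨fun _ _ => measurable_const, fun g₁ g₂ g₃ => ae_of_all _ fun x => by simp⟩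
  mul_mem' := by
    rintro c₁ c₂ ⟨m1, h1⟩ ⟨m2, h2⟩
    refine ⟨fun g h => (m1 g h).mul (m2 g h), fun g₁ g₂ g₃ => ?_⟩
    filter_upwards [h1 g₁ g₂ g₃, h2 g₁ g₂ g₃] with x e1 e2
    simp only [Pi.mul_apply]
    exact mul4 e1 e2
  inv_mem' := by
    rintro c ⟨m, hc⟩
    refine ⟨fun g h => (m g h).inv, fun g₁ g₂ g₃ => ?_⟩
    filter_upwards [hc g₁ g₂ g₃] with x e
    simp only [Pi.inv_apply, inv_inv]
    exact inv4 e

/-- The subgroup of measurable 2-cocycles that are cohomologous to a constant (in the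
space variable) 2-cocycle coming from a group 2-cocycle `θ : G² → 𝕋`; this is the
preimage in `Z²(G ↷ X; 𝕋)` of the subgroup `Ψ₂(H²(G, 𝕋))` of `H²(G ↷ X; 𝕋)`, so that
`H²(G ↷ X; 𝕋)/Ψ₂(H²(G, 𝕋)) = measZ2 ⧸ measBPsi2`. -/
def measBPsi2 (a : G → X → X) (μ : Measure X) : Subgroup (G → G → X → Circle) where
  carrier := {c | ∃ (θ : G → G → Circle) (b : G → X → Circle), IsGrpCocycle2 θ ∧
    (∀ g, Measurable (b g)) ∧
    ∀ g h : G, ∀ᵐ x ∂μ, c g h x = θ g h * (b h (a g⁻¹ x) * (b (g * h) x)⁻¹ * b g x)}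
  one_mem' := ⟨fun _ _ => 1, fun _ => 1, fun g₁ g₂ g₃ => by simp, fun _ => measurable_const,
    fun g h => ae_of_all _ fun x => by simp⟩
  mul_mem' := by
    rintro c₁ c₂ ⟨θ₁, b₁, hθ₁, hb₁, h1⟩ ⟨θ₂, b₂, hθ₂, hb₂, h2⟩
    refine ⟨fun g h => θ₁ g h * θ₂ g h, fun g => b₁ g * b₂ g,
      fun g₁ g₂ g₃ => mul4 (hθ₁ g₁ g₂ g₃) (hθ₂ g₁ g₂ g₃),
      fun g => (hb₁ g).mul (hb₂ g), fun g h => ?_⟩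
    filter_upwards [h1 g h, h2 g h] with x e1 e2
    simp only [Pi.mul_apply]
    rw [e1, e2]
    simp only [mul_inv]
    ac_rfl
  inv_mem' := by
    rintro c ⟨θ, b, hθ, hb, hc⟩
    refine ⟨fun g h => (θ g h)⁻¹, fun g => (b g)⁻¹,
      fun g₁ g₂ g₃ => by simpa only [inv_inv] using inv4 (hθ g₁ g₂ g₃),
      fun g => (hb g).inv, fun g h => ?_⟩
    filter_upwards [hc g h] with x e
    simp only [Pi.inv_apply]
    rw [e]
    simp only [mul_inv, inv_inv]
    try ac_rfl

/-- The measurable 2-cocycle induced by a module 2-cocycle: evaluation of characters. -/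
def ind2 (c : G → G → charGroup X) : G → G → X → Circle := fun g h => (c g h : X → Circle)

end Degree2


section Bernoulli

/-- The Bernoulli shift action `G ↷ X₀^G`, `(g • x) h = x (g⁻¹ h)`. -/
def bernoulliShift (G X₀ : Type*) [Group G] : G → (G → X₀) → (G → X₀) :=
  fun g x h => x (g⁻¹ * h)

/-- `μ` is the product along `ι` of copies of `μ₀`: it gives every finite-dimensional
cylinder set its product measure.  (This characterizes the Bernoulli product measure
`μ₀^ι` uniquely.) -/
def IsBernoulliMeasure {ι X₀ : Type*} [MeasurableSpace X₀] (μ₀ : Measure X₀)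
    (μ : Measure (ι → X₀)) : Prop :=
  ∀ (s : Finset ι) (t : ι → Set X₀), (∀ i, MeasurableSet (t i)) →
    μ {x | ∀ i ∈ s, x i ∈ t i} = ∏ i ∈ s, μ₀ (t i)

/-- The class `𝒢` of countable groups `G` such that for every standard probability
space `(X₀, μ₀)` the Bernoulli shift `G ↷ (X₀^G, μ₀^G)` is `𝕋`-cocycle superrigid. -/
def InClassG (G : Type*) [Group G] : Prop :=
  ∀ (X₀ : Type) [MeasurableSpace X₀] [StandardBorelSpace X₀]
    (μ₀ : Measure X₀) [IsProbabilityMeasure μ₀]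
    (μ : Measure (G → X₀)) [IsProbabilityMeasure μ],
    IsBernoulliMeasure μ₀ μ → IsCocycleSuperrigid (bernoulliShift G X₀) μ

end Bernoulli


set_option linter.unusedSectionVars false
set_option linter.unusedVariables false
set_option linter.style.longLine false


theorem haar_of_bernoulli {ι K : Type} [Countable ι] [CommGroup K] [TopologicalSpace K]
    [IsTopologicalGroup K] [CompactSpace K] [SecondCountableTopology K] [MeasurableSpace K]
    [BorelSpace K] (κ : Measure K) [IsProbabilityMeasure κ] [κ.IsHaarMeasure]
    (m : Measure (ι → K)) [IsProbabilityMeasure m] (hm : IsBernoulliMeasure κ m) :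
    m.IsHaarMeasure := by
  have key : ∀ m' : Measure (ι → K), IsBernoulliMeasure κ m' →
      m' = Measure.infinitePi (fun _ => κ) := by
    intro m' hm'
    apply Measure.eq_infinitePi
    intro s t ht
    rw [← hm' s t ht]
    congr 1
  have hinv : m.IsMulLeftInvariant := by
    refine ⟨fun g => ?_⟩
    rw [key m hm]
    apply key
    intro s t ht
    have hmeas : MeasurableSet {x : ι → K | ∀ i ∈ s, x i ∈ t i} := by
      have : {x : ι → K | ∀ i ∈ s, x i ∈ t i} = Set.pi s t := by ext; simp
      rw [this]
      exact MeasurableSet.pi s.countable_toSet (fun i _ => ht i)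
    rw [Measure.map_apply (by fun_prop) hmeas]
    have h2 := hm s (fun i => (g i * ·) ⁻¹' (t i)) (fun i => (measurable_const_mul (g i)) (ht i))
    rw [← key m hm]
    refine Eq.trans ?_ (h2.trans ?_)
    · rfl
    · refine Finset.prod_congr rfl fun i _ => ?_
      exact measure_preimage_mul κ (g i) (t i)
  exact Measure.isHaarMeasure_of_isCompact_nonempty_interior m Set.univ isCompact_univ
    (by simp) (by simp) (by simp)

theorem mp_of_hom {A B : Type*} [Group A] [TopologicalSpace A] [IsTopologicalGroup A]
    [CompactSpace A] [MeasurableSpace A] [BorelSpace A]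
    [Group B] [TopologicalSpace B] [IsTopologicalGroup B]
    [CompactSpace B] [MeasurableSpace B] [BorelSpace B] [SecondCountableTopology B]
    (α : Measure A) [IsProbabilityMeasure α] [α.IsHaarMeasure]
    (β : Measure B) [IsProbabilityMeasure β] [β.IsHaarMeasure]
    (f : A → B) (hmul : ∀ x y, f (x * y) = f x * f y) (hf : Continuous f)
    (s : B → A) (hs : ∀ b, f (s b) = b) : MeasurePreserving f α β :=
  MonoidHom.measurePreserving (f := MonoidHom.mk' f hmul) hf (fun b => ⟨s b, hs b⟩) (by simp)



section Chr
variable {ι : Type}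

/-- The character of the torus `𝕋^ι` attached to `n : ι →₀ ℤ`. -/
def chr (n : ι →₀ ℤ) (x : ι → Circle) : Circle := n.prod fun k m => x k ^ m

theorem chr_zero (x : ι → Circle) : chr 0 x = 1 := by simp [chr]

theorem chr_add (m n : ι →₀ ℤ) (x : ι → Circle) : chr (m + n) x = chr m x * chr n x := by
  classical
  unfold chr
  exact Finsupp.prod_add_index' (fun _ => zpow_zero _) (fun _ _ _ => zpow_add _ _ _)

theorem chr_neg (n : ι →₀ ℤ) (x : ι → Circle) : chr (-n) x = (chr n x)⁻¹ := by
  rw [eq_inv_iff_mul_eq_one, ← chr_add]; simp [chr_zero]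

theorem chr_sub (m n : ι →₀ ℤ) (x : ι → Circle) : chr (m - n) x = chr m x * (chr n x)⁻¹ := by
  rw [sub_eq_add_neg, chr_add, chr_neg]

theorem chr_mul (n : ι →₀ ℤ) (x y : ι → Circle) : chr n (x * y) = chr n x * chr n y := by
  simp [chr, mul_zpow, Finsupp.prod_mul]

theorem chr_single (i : ι) (x : ι → Circle) : chr (Finsupp.single i 1) x = x i := by
  simp [chr]

theorem chr_continuous (n : ι →₀ ℤ) : Continuous (chr n) := by
  unfold chr Finsupp.prod
  exact continuous_finsetProd _ fun i _ => (continuous_apply i).zpow _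

theorem chr_mapDomain {κ : Type} (f : ι → κ) (n : ι →₀ ℤ) (x : κ → Circle) :
    chr (n.mapDomain f) x = chr n (fun i => x (f i)) := by
  unfold chr
  exact Finsupp.prod_mapDomain_index (fun _ => zpow_zero _) (fun _ _ _ => zpow_add _ _ _)

theorem exists_chr_ne_one {n : ι →₀ ℤ} (hn : n ≠ 0) : ∃ x, chr n x ≠ 1 := by
  classical
  obtain ⟨i, hi⟩ := Finsupp.ne_iff.1 hn
  obtain ⟨z, hz⟩ : ∃ z : Circle, z ^ (n i) ≠ 1 := by
    refine ⟨Circle.exp (Real.pi / n i), ?_⟩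
    have h0 : (n i : ℝ) ≠ 0 := by exact_mod_cast hi
    rw [← Circle.exp_zsmul]
    simp only [zsmul_eq_mul]
    rw [mul_div_cancel₀ _ h0]
    intro h
    have := congrArg (fun z : Circle => (z : ℂ)) h
    simp only [Circle.coe_exp, Complex.exp_pi_mul_I, Circle.coe_one] at this
    norm_num at this
  refine ⟨Function.update 1 i z, ?_⟩
  have hi' : i ∈ n.support := Finsupp.mem_support_iff.2 hi
  unfold chr Finsupp.prod
  rw [Finset.prod_eq_single_of_mem i hi']
  · simpa using hz
  · intro j _ hj
    simp [Function.update_of_ne hj]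

/-- The character as a continuous complex function. -/
def chrC (n : ι →₀ ℤ) : C(ι → Circle, ℂ) :=
  ⟨fun x => (chr n x : ℂ), continuous_subtype_val.comp (chr_continuous n)⟩

theorem chrC_apply (n : ι →₀ ℤ) (x : ι → Circle) : chrC n x = (chr n x : ℂ) := rfl

/-- The star subalgebra of trigonometric polynomials. -/
def chrSubalgebra : StarSubalgebra ℂ C(ι → Circle, ℂ) where
  toSubalgebra := Algebra.adjoin ℂ (Set.range chrC)
  star_mem' := by
    change Algebra.adjoin ℂ (Set.range (chrC (ι := ι))) ≤
      star (Algebra.adjoin ℂ (Set.range (chrC (ι := ι))))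
    refine Algebra.adjoin_le ?_
    rintro - ⟨n, rfl⟩
    refine Algebra.subset_adjoin ⟨-n, ?_⟩
    ext x
    simp only [chrC_apply, chr_neg, Circle.coe_inv_eq_conj]
    rfl

theorem chrSubalgebra_coe :
    Subalgebra.toSubmodule (chrSubalgebra (ι := ι)).toSubalgebra
      = Submodule.span ℂ (Set.range (chrC (ι := ι))) := by
  apply Algebra.adjoin_eq_span_of_subset
  refine Set.Subset.trans ?_ Submodule.subset_span
  intro x hx
  refine Submonoid.closure_induction (fun _ => id) ⟨0, ?_⟩ ?_ hx
  · ext1 z; simp [chrC_apply, chr_zero]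
  · rintro - - - - ⟨m, rfl⟩ ⟨n, rfl⟩
    refine ⟨m + n, ?_⟩
    ext1 z
    simp [chrC_apply, chr_add]

theorem chrSpan_dense :
    (Submodule.span ℂ (Set.range (chrC (ι := ι)))).topologicalClosure = ⊤ := by
  rw [← chrSubalgebra_coe]
  have h : (chrSubalgebra (ι := ι)).topologicalClosure = ⊤ := by
    apply ContinuousMap.starSubalgebra_topologicalClosure_eq_top_of_separatesPoints
    intro x y hxy
    obtain ⟨i, hi⟩ := Function.ne_iff.1 hxy
    refine ⟨_, ⟨chrC (Finsupp.single i 1), Algebra.subset_adjoin ⟨_, rfl⟩, rfl⟩, ?_⟩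
    simp only [chrC_apply, chr_single]
    exact fun h => hi (Circle.ext h)
  exact congrArg (fun A : StarSubalgebra ℂ C(ι → Circle, ℂ) =>
    Subalgebra.toSubmodule A.toSubalgebra) h

variable [Countable ι]

theorem integral_mul_continuous_eq_zero (μ : Measure (ι → Circle)) [IsProbabilityMeasure μ]
    {f : (ι → Circle) → ℂ} (hf : Integrable f μ)
    (h0 : ∀ n : ι →₀ ℤ, ∫ x, f x * chr n x ∂μ = 0) (g : C(ι → Circle, ℂ)) :
    ∫ x, f x * g x ∂μ = 0 := by
  have hIntg : ∀ g : C(ι → Circle, ℂ), Integrable (fun x => f x * g x) μ := by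
    intro g
    refine hf.mul_bdd (c := ‖g‖) g.continuous.measurable.aestronglyMeasurable ?_
    exact ae_of_all _ fun x => g.norm_coe_le_norm x
  let L : C(ι → Circle, ℂ) →ₗ[ℂ] ℂ :=
    { toFun := fun g => ∫ x, f x * g x ∂μ
      map_add' := by
        intro g h
        rw [← integral_add (hIntg g) (hIntg h)]
        simp [mul_add]
      map_smul' := by
        intro c g
        simp only [RingHom.id_apply, smul_eq_mul]
        rw [← integral_const_mul]
        congr 1; ext x; simp; ring }
  let L' := L.mkContinuous (∫ x, ‖f x‖ ∂μ) (by
    intro g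
    refine (norm_integral_le_integral_norm _).trans ?_
    rw [← integral_mul_const]
    refine integral_mono (hIntg g).norm (hf.norm.mul_const _) fun x => ?_
    simp only [norm_mul]
    exact mul_le_mul_of_nonneg_left (g.norm_coe_le_norm x) (norm_nonneg _))
  have hker : (⊤ : Submodule ℂ C(ι → Circle, ℂ)) ≤ LinearMap.ker L'.toLinearMap := by
    rw [← chrSpan_dense]
    apply Submodule.topologicalClosure_minimal
    · rw [Submodule.span_le]
      rintro _ ⟨n, rfl⟩
      exact h0 n
    · exact L'.isClosed_ker
  exact hker (Submodule.mem_top (x := g))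

theorem chr_complete (μ : Measure (ι → Circle)) [IsProbabilityMeasure μ]
    {f : (ι → Circle) → ℂ} (hf : Integrable f μ)
    (h0 : ∀ n : ι →₀ ℤ, ∫ x, f x * chr n x ∂μ = 0) : f =ᵐ[μ] 0 := by
  apply ae_eq_zero_of_forall_setIntegral_isClosed_eq_zero hf
  intro s hs
  have hlim : Filter.Tendsto (fun k => ∫ x, f x * ((hs.apprSeq k x : ℝ) : ℂ) ∂μ) Filter.atTop
      (nhds (∫ x, s.indicator f x ∂μ)) := by
    apply tendsto_integral_of_dominated_convergence (fun x => ‖f x‖)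
    · intro k
      refine hf.aestronglyMeasurable.mul ?_
      have : Continuous fun x => ((hs.apprSeq k x : ℝ) : ℂ) := by
        have := (hs.apprSeq k).continuous
        fun_prop
      exact this.measurable.aestronglyMeasurable
    · exact hf.norm
    · intro k
      refine ae_of_all _ fun x => ?_
      rw [norm_mul]
      have h1 : ‖((hs.apprSeq k x : ℝ) : ℂ)‖ ≤ 1 := by
        rw [Complex.norm_real, Real.norm_of_nonneg (NNReal.coe_nonneg _)]
        exact_mod_cast HasOuterApproxClosed.apprSeq_apply_le_one hs k x
      exact mul_le_of_le_one_right (norm_nonneg _) h1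
    · refine ae_of_all _ fun x => ?_
      have h2 := tendsto_pi_nhds.1 (HasOuterApproxClosed.tendsto_apprSeq hs) x
      have h3 : Filter.Tendsto (fun k => f x * ((hs.apprSeq k x : ℝ) : ℂ)) Filter.atTop
          (nhds (f x * (((s.indicator (fun _ => (1 : NNReal)) x : NNReal) : ℝ) : ℂ))) := by
        refine Filter.Tendsto.const_mul _ ?_
        exact (Complex.continuous_ofReal.tendsto _).comp
          ((NNReal.continuous_coe.tendsto _).comp h2)
      convert h3 using 2
      by_cases hx : x ∈ s <;> simp [hx]
  have hz : ∀ k, ∫ x, f x * ((hs.apprSeq k x : ℝ) : ℂ) ∂μ = 0 := by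
    intro k
    have hc : Continuous fun x => ((hs.apprSeq k x : ℝ) : ℂ) := by
      have := (hs.apprSeq k).continuous
      fun_prop
    exact integral_mul_continuous_eq_zero μ hf h0 ⟨_, hc⟩
  simp only [hz] at hlim
  rw [← integral_indicator hs.measurableSet]
  exact (tendsto_nhds_unique hlim tendsto_const_nhds)

theorem integral_chr (μ : Measure (ι → Circle)) [IsProbabilityMeasure μ] [μ.IsHaarMeasure]
    {n : ι →₀ ℤ} (hn : n ≠ 0) : ∫ x, (chr n x : ℂ) ∂μ = 0 := by
  obtain ⟨t, ht⟩ := exists_chr_ne_one hn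
  have h := integral_mul_left_eq_self (μ := μ) (fun x => (chr n x : ℂ)) t
  simp only [chr_mul, Circle.coe_mul] at h
  rw [integral_const_mul] at h
  have h1 : ((chr n t : ℂ) - 1) * ∫ x, (chr n x : ℂ) ∂μ = 0 := by rw [sub_mul, h]; ring
  rcases mul_eq_zero.1 h1 with h2 | h2
  · exact absurd (Circle.ext (by simpa using sub_eq_zero.1 h2)) ht
  · exact h2

end Chr


section Erg
variable {ι : Type} [Countable ι]

theorem circle_coe_cont : Continuous (fun z : Circle => (z : ℂ)) := by
  exact continuous_subtype_val

theorem circle_coe_meas : Measurable (fun z : Circle => (z : ℂ)) := circle_coe_cont.measurable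

theorem circle_memLp {Z : Type*} [MeasurableSpace Z] (ρ : Measure Z) [IsProbabilityMeasure ρ]
    {W : Z → Circle} (hW : Measurable W) (p : ENNReal) : MemLp (fun z => (W z : ℂ)) p ρ := by
  refine MemLp.of_bound (C := 1) ?_ ?_
  · exact (circle_coe_meas.comp hW).aestronglyMeasurable
  · exact ae_of_all _ fun z => (Circle.norm_coe _).le

theorem circle_integrable {Z : Type*} [MeasurableSpace Z] (ρ : Measure Z) [IsProbabilityMeasure ρ]
    {W : Z → Circle} (hW : Measurable W) : Integrable (fun z => (W z : ℂ)) ρ :=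
  memLp_one_iff_integrable.1 (circle_memLp ρ hW 1)

theorem chr_measurable (n : ι →₀ ℤ) : Measurable (chr n) := (chr_continuous n).measurable

theorem bessel (μ : Measure (ι → Circle)) [IsProbabilityMeasure μ] [μ.IsHaarMeasure]
    {W : (ι → Circle) → Circle} (hW : Measurable W) (S : Finset (ι →₀ ℤ)) :
    ∑ n ∈ S, ‖∫ x, (W x : ℂ) * chr n x ∂μ‖ ^ 2 ≤ 1 := by
  let e : (ι →₀ ℤ) → Lp ℂ 2 μ := fun n => (circle_memLp μ (chr_measurable (-n)) 2).toLp _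
  let w : Lp ℂ 2 μ := (circle_memLp μ hW 2).toLp _
  have hinner : ∀ (n : ι →₀ ℤ) (V : (ι → Circle) → Circle) (hV : Measurable V),
      inner ℂ (e n) ((circle_memLp μ hV 2).toLp _) = ∫ x, (V x : ℂ) * chr n x ∂μ := by
    intro n V hV
    rw [L2.inner_def]
    apply integral_congr_ae
    filter_upwards [(circle_memLp μ (chr_measurable (-n)) 2).coeFn_toLp,
      (circle_memLp μ hV 2).coeFn_toLp] with x h1 h2
    rw [h1, h2]
    simp only [RCLike.inner_apply, chr_neg, Circle.coe_inv_eq_conj]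
    simp
  have hon : Orthonormal ℂ e := by
    classical
    rw [orthonormal_iff_ite]
    intro i j
    rw [hinner i (chr (-j)) (chr_measurable _)]
    have : ∀ x, ((chr (-j) x : Circle) : ℂ) * chr i x = chr (i - j) x := by
      intro x
      rw [← Circle.coe_mul, ← chr_add, neg_add_eq_sub]
    simp only [this]
    split_ifs with h
    · subst h; simp [chr_zero]
    · exact integral_chr μ (sub_ne_zero.2 h)
  have := hon.sum_inner_products_le w (s := S)
  have hw : ‖w‖ ^ 2 ≤ 1 := by
    have : ‖w‖ ≤ 1 := by
      rw [Lp.norm_toLp]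
      refine ENNReal.toReal_le_of_le_ofReal zero_le_one ?_
      refine (eLpNorm_le_of_ae_bound (C := 1) (ae_of_all _ fun z => (Circle.norm_coe _).le)).trans ?_
      simp
    exact pow_le_one₀ (norm_nonneg _) this
  refine le_trans (le_of_eq ?_) (this.trans hw)
  refine Finset.sum_congr rfl fun n _ => ?_
  rw [← hinner n W hW]

theorem shift_mp {G : Type} [Group G] [MulAction G ι]
    (μ : Measure (ι → Circle)) [IsProbabilityMeasure μ] [μ.IsHaarMeasure] (g : G) :
    MeasurePreserving (fun (z : ι → Circle) i => z (g • i)) μ μ :=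
  mp_of_hom μ μ _ (fun _ _ => rfl) (by fun_prop) (fun z i => z (g⁻¹ • i))
    (fun z => by funext i; simp)

theorem eigen_const {G : Type} [Group G] [Infinite G] [MulAction G ι]
    (hfin : ∀ i j : ι, {g : G | g • i = j}.Finite)
    (μ : Measure (ι → Circle)) [IsProbabilityMeasure μ] [μ.IsHaarMeasure]
    {W : (ι → Circle) → Circle} (hW : Measurable W) (lam : G → Circle)
    (h : ∀ g : G, ∀ᵐ z ∂μ, W (fun i => z (g • i)) = lam g * W z) :
    ∃ c : Circle, ∀ᵐ z ∂μ, W z = c := by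
  classical
  let a : (ι →₀ ℤ) → ℂ := fun n => ∫ x, (W x : ℂ) * chr n x ∂μ
  have hwm : ∀ n : ι →₀ ℤ, Measurable fun z => W z * chr n z := fun n => hW.mul (chr_measurable n)
  have ha : ∀ (g : G) n, ‖a (n.mapDomain (g • ·))‖ = ‖a n‖ := by
    intro g n
    have h1 : a n = lam g * a (n.mapDomain (g • ·)) := by
      have hm : Measurable fun z => ((W z * chr n z : Circle) : ℂ) :=
        circle_coe_meas.comp (hwm n)
      have h2 : ∫ z, ((W z * chr n z : Circle) : ℂ) ∂μ
          = ∫ z, ((W (fun i => z (g • i)) * chr n (fun i => z (g • i)) : Circle) : ℂ) ∂μ := by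
        conv_lhs => rw [← (shift_mp μ g).map_eq]
        rw [integral_map (shift_mp μ g).measurable.aemeasurable hm.aestronglyMeasurable]
      simp only [Circle.coe_mul] at h2
      simp only [a]
      rw [h2, ← integral_const_mul]
      apply integral_congr_ae
      filter_upwards [h g] with z hz
      rw [hz, chr_mapDomain, Circle.coe_mul, mul_assoc]
    rw [h1, norm_mul, Circle.norm_coe, one_mul]
  have hzero : ∀ n, n ≠ 0 → a n = 0 := by
    intro n hn
    by_contra hne
    have hpos : 0 < ‖a n‖ ^ 2 := by positivity
    obtain ⟨i, hi⟩ := Finsupp.ne_iff.1 hn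
    have hi' : n i ≠ 0 := by simpa using hi
    let O : Set (ι →₀ ℤ) := Set.range fun g : G => n.mapDomain (g • ·)
    have hO : O.Infinite := by
      intro hOf
      have : (Set.univ : Set G).Finite := by
        have hu : (Set.univ : Set G) ⊆ ⋃ m ∈ O, ⋃ j ∈ (m.support : Set ι), {g : G | g • i = j} := by
          intro g _
          simp only [Set.mem_iUnion]
          refine ⟨_, ⟨g, rfl⟩, g • i, ?_, rfl⟩
          simp only [Finset.mem_coe, Finsupp.mem_support_iff]
          rw [Finsupp.mapDomain_apply (MulAction.injective g)]
          exact hi'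
        refine Set.Finite.subset ?_ hu
        exact hOf.biUnion fun m _ => (Finset.finite_toSet _).biUnion fun j _ => hfin i j
      exact Set.infinite_univ this
    obtain ⟨N, hN⟩ := exists_nat_gt (1 / ‖a n‖ ^ 2)
    obtain ⟨S, hS, hcard⟩ := hO.exists_subset_card_eq N
    have hb := bessel μ hW S
    have : ∑ m ∈ S, ‖∫ x, (W x : ℂ) * chr m x ∂μ‖ ^ 2 = N * ‖a n‖ ^ 2 := by
      rw [← hcard, ← nsmul_eq_mul]
      apply Finset.sum_eq_card_nsmul
      intro m hm
      obtain ⟨g, rfl⟩ := hS hm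
      exact congrArg (· ^ 2) (ha g n)
    rw [this] at hb
    rw [div_lt_iff₀ hpos] at hN
    linarith
  have hae : (fun z => (W z : ℂ) - a 0) =ᵐ[μ] 0 := by
    apply chr_complete μ ((circle_integrable μ hW).sub (integrable_const _))
    intro n
    have : ∀ z, ((W z : ℂ) - a 0) * chr n z = (W z : ℂ) * chr n z - a 0 * chr n z :=
      fun z => sub_mul _ _ _
    refine (integral_congr_ae (ae_of_all _ this)).trans ?_
    rw [integral_sub (by simpa only [Circle.coe_mul] using circle_integrable μ (hwm n))
      ((circle_integrable μ (chr_measurable n)).const_mul _), integral_const_mul]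
    by_cases hn : n = 0
    · subst hn
      simp [a, chr_zero]
    · rw [integral_chr μ hn]
      simpa using hzero n hn
  obtain ⟨z0, hz0⟩ := hae.exists
  refine ⟨W z0, ?_⟩
  filter_upwards [hae] with z hz
  apply Circle.ext
  have e1 := sub_eq_zero.1 (show (W z : ℂ) - a 0 = 0 from hz)
  have e2 := sub_eq_zero.1 (show (W z0 : ℂ) - a 0 = 0 from hz0)
  rw [e1, e2]

theorem affine_const (μ : Measure (ι → Circle)) [IsProbabilityMeasure μ] [μ.IsHaarMeasure]
    {f : (ι → Circle) → Circle} (hf : Measurable f)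
    (h : ∀ᵐ x ∂μ, ∀ᵐ r ∂μ, ∀ᵐ y ∂μ, f (x * y) * f (x * r) = f x * f (x * y * r)) :
    ∃ (c : Circle) (n : ι →₀ ℤ), ∀ᵐ x ∂μ, f x = c * chr n x := by
  obtain ⟨n, hn⟩ : ∃ n : ι →₀ ℤ, ∫ x, (f x : ℂ) * chr n x ∂μ ≠ 0 := by
    by_contra! hcon
    obtain ⟨z, hz⟩ := (chr_complete μ (circle_integrable μ hf) hcon).exists
    simp at hz
  let F : (ι → Circle) → Circle := fun x => f x * chr n x
  have hF : Measurable F := hf.mul (chr_measurable n)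
  set M : ℂ := ∫ x, (F x : ℂ) ∂μ with hM
  have hM0 : M ≠ 0 := by simpa [hM, F] using hn
  have hx : ∀ᵐ x ∂μ, M = F x := by
    filter_upwards [h] with x hx
    have h1 : ∀ᵐ r ∂μ, (F (x * r) : ℂ) = F x := by
      filter_upwards [hx] with r hr
      have h2 : ∫ y, (F (x * y) : ℂ) * F (x * r) ∂μ = ∫ y, (F x : ℂ) * F (x * r * y) ∂μ := by
        apply integral_congr_ae
        filter_upwards [hr] with y hy
        rw [← Circle.coe_mul, ← Circle.coe_mul]
        congr 1
        have hy' : x * r * y = x * y * r := mul_right_comm x r y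
        have : F (x * y) * F (x * r) = (f (x * y) * f (x * r)) *
            (chr n x * chr n y * chr n x * chr n r) := by
          simp only [F, chr_mul]
          ac_rfl
        rw [this, hy, hy']
        simp only [F, chr_mul]
        ac_rfl
      rw [integral_mul_const, integral_const_mul,
        integral_mul_left_eq_self (fun y => (F y : ℂ)) x,
        integral_mul_left_eq_self (fun y => (F y : ℂ)) (x * r), ← hM, mul_comm] at h2
      exact mul_right_cancel₀ hM0 h2
    have h3 := integral_congr_ae h1
    rw [integral_mul_left_eq_self (fun y => (F y : ℂ)) x] at h3
    simpa using h3
  obtain ⟨x0, hx0⟩ := hx.exists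
  refine ⟨F x0, -n, ?_⟩
  filter_upwards [hx] with x hx
  have : F x = F x0 := Circle.ext (by rw [← hx, ← hx0])
  rw [← this, chr_neg]
  simp [F]

theorem chr_unique (μ : Measure (ι → Circle)) [IsProbabilityMeasure μ] [μ.IsHaarMeasure]
    (c : Circle) (m n : ι →₀ ℤ) (h : ∀ᵐ x ∂μ, chr m x = c * chr n x) : m = n := by
  by_contra hne
  have h1 := integral_chr μ (sub_ne_zero.2 hne)
  have h2 : ∀ᵐ x ∂μ, ((chr (m - n) x : Circle) : ℂ) = c := by
    filter_upwards [h] with x hx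
    rw [chr_sub, hx]
    simp
  rw [integral_congr_ae h2] at h1
  simp at h1

end Erg



section Gelf
variable {X : Type} [CommGroup X] [TopologicalSpace X] [IsTopologicalGroup X]
  [CompactSpace X] [SecondCountableTopology X] [MeasurableSpace X] [BorelSpace X]

/-- norm -/
def nrm (μ : Measure X) (f : X → ℂ) : ℝ := (eLpNorm f 2 μ).toReal

/-- twisted convolution operator -/
def kop (μ : Measure X) (U : X → X → Circle) (φ f : X → ℂ) (x : X) : ℂ :=
  ∫ y, φ y * U x y * f (x * y) ∂μ

/-- trilinear form -/
def tform (μ : Measure X) (U : X → X → Circle) (f g h : X → ℂ) : ℂ :=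
  ∫ p, f p.1 * g p.2 * U p.1 p.2 * h (p.1 * p.2) ∂(μ.prod μ)

variable (μ : Measure X) [IsProbabilityMeasure μ] [μ.IsHaarMeasure]

theorem memLp_trans {f : X → ℂ} (hf : MemLp f 2 μ) (x : X) : MemLp (fun y => f (x * y)) 2 μ :=
  hf.comp_measurePreserving (measurePreserving_mul_left μ x)

theorem nrm_trans {f : X → ℂ} (hf : MemLp f 2 μ) (x : X) :
    nrm μ (fun y => f (x * y)) = nrm μ f := by
  unfold nrm
  congr 1
  exact eLpNorm_comp_measurePreserving hf.1 (measurePreserving_mul_left μ x)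

theorem memLp_circle_mul {f : X → ℂ} (hf : MemLp f 2 μ) {V : X → Circle} (hV : Measurable V) :
    MemLp (fun y => (V y : ℂ) * f y) 2 μ := by
  refine hf.of_le (f := fun y => (V y : ℂ) * f y) ((circle_coe_meas.comp hV).aestronglyMeasurable.mul hf.1) ?_
  exact ae_of_all _ fun y => by rw [norm_mul, Circle.norm_coe, one_mul]

theorem integrable_mul2 {f g : X → ℂ} (hf : MemLp f 2 μ) (hg : MemLp g 2 μ) :
    Integrable (fun x => f x * g x) μ := hf.integrable_mul hg

theorem integral_norm_mul2 {f g : X → ℂ} (hf : MemLp f 2 μ) (hg : MemLp g 2 μ) :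
    ∫ x, ‖f x * g x‖ ∂μ ≤ nrm μ f * nrm μ g := by
  have h1 : eLpNorm (f • g) 1 μ ≤ eLpNorm f 2 μ * eLpNorm g 2 μ :=
    eLpNorm_smul_le_mul_eLpNorm hg.1 hf.1
  have h2 : ∫ x, ‖f x * g x‖ ∂μ = (eLpNorm (f • g) 1 μ).toReal := by
    rw [eLpNorm_one_eq_lintegral_enorm]
    exact integral_norm_eq_lintegral_enorm (hf.1.mul hg.1)
  rw [h2, nrm, nrm, ← ENNReal.toReal_mul]
  exact ENNReal.toReal_mono (ENNReal.mul_ne_top hf.2.ne hg.2.ne) h1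

theorem kop_bound {U : X → X → Circle} (hU : Measurable (Function.uncurry U))
    {φ f : X → ℂ} (hφ : MemLp φ 2 μ) (hf : MemLp f 2 μ) (x : X) :
    ‖kop μ U φ f x‖ ≤ nrm μ φ * nrm μ f := by
  unfold kop
  refine (norm_integral_le_integral_norm _).trans ?_
  rw [← nrm_trans μ hf x]
  refine le_trans (le_of_eq ?_) (integral_norm_mul2 μ hφ (memLp_trans μ hf x))
  refine integral_congr_ae (ae_of_all _ fun y => ?_)
  simp only [norm_mul, Circle.norm_coe, mul_one]

theorem kop_integrable {U : X → X → Circle} (hU : Measurable (Function.uncurry U))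
    {φ f : X → ℂ} (hφ : MemLp φ 2 μ) (hf : MemLp f 2 μ) (x : X) :
    Integrable (fun y => φ y * U x y * f (x * y)) μ := by
  have hUx : Measurable (U x) := hU.comp (by fun_prop : Measurable fun y => (x, y))
  have := integrable_mul2 μ (memLp_circle_mul μ hφ hUx) (memLp_trans μ hf x)
  refine this.congr (ae_of_all _ fun y => ?_)
  simp only [mul_comm (φ y)]

theorem tri_int {U : X → X → Circle} (hU : Measurable (Function.uncurry U))
    {f g h : X → ℂ} (hf : MemLp f 2 μ) (hg : MemLp g 2 μ) (hh : MemLp h 2 μ) :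
    Integrable (fun p : X × X => f p.1 * g p.2 * U p.1 p.2 * h (p.1 * p.2)) (μ.prod μ) := by
  have hm : MeasurePreserving (fun p : X × X => p.1 * p.2) (μ.prod μ) μ :=
    mp_of_hom (μ.prod μ) μ _ (fun p q => by simp [mul_mul_mul_comm]) (by fun_prop)
      (fun x => (x, 1)) (fun x => by simp)
  have hae : AEStronglyMeasurable
      (fun p : X × X => f p.1 * g p.2 * U p.1 p.2 * h (p.1 * p.2)) (μ.prod μ) := by
    refine ((hf.1.comp_fst.mul hg.1.comp_snd).mul ?_).mul
      (hh.1.comp_measurePreserving hm)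
    exact (circle_coe_meas.comp hU).aestronglyMeasurable
  rw [integrable_prod_iff hae]
  constructor
  · refine ae_of_all _ fun x => ?_
    have := (kop_integrable μ hU hg hh x).const_mul (f x)
    refine this.congr (ae_of_all _ fun y => ?_)
    simp only [mul_assoc]
  · have hfi : Integrable (fun x => ‖f x‖ * (nrm μ g * nrm μ h)) μ :=
      (hf.integrable (by norm_num)).norm.mul_const _
    refine hfi.mono' hae.norm.integral_prod_right' (ae_of_all _ fun x => ?_)
    rw [Real.norm_of_nonneg (integral_nonneg fun _ => norm_nonneg _)]
    have : ∀ y, ‖f x * g y * U x y * h (x * y)‖ = ‖f x‖ * ‖g y * h (x * y)‖ := by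
      intro y
      simp only [norm_mul, Circle.norm_coe, one_mul, mul_assoc]
    simp only [this]
    rw [integral_const_mul, ← nrm_trans μ hh x]
    exact mul_le_mul_of_nonneg_left (integral_norm_mul2 μ hg (memLp_trans μ hh x)) (norm_nonneg _)

theorem tform_left {U : X → X → Circle} (hU : Measurable (Function.uncurry U))
    {f g h : X → ℂ} (hf : MemLp f 2 μ) (hg : MemLp g 2 μ) (hh : MemLp h 2 μ) :
    tform μ U f g h = ∫ x, f x * kop μ U g h x ∂μ := by
  unfold tform kop
  rw [integral_prod _ (tri_int μ hU hf hg hh)]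
  refine integral_congr_ae (ae_of_all _ fun x => ?_)
  simp only
  rw [← integral_const_mul]
  simp only [mul_assoc]

/-- twisted convolution -/
def conv (μ : Measure X) (U : X → X → Circle) (f g : X → ℂ) (w : X) : ℂ :=
  ∫ y, f y * g (y⁻¹ * w) * U y (y⁻¹ * w) ∂μ

theorem conv_bound {U : X → X → Circle}
    {f g : X → ℂ} (hf : MemLp f 2 μ) (hg : MemLp g 2 μ) (w : X) :
    ‖conv μ U f g w‖ ≤ nrm μ f * nrm μ g := by
  unfold conv
  refine (norm_integral_le_integral_norm _).trans ?_
  have hmp : MeasurePreserving (fun y : X => y⁻¹ * w) μ μ :=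
    (measurePreserving_mul_right μ w).comp (Measure.measurePreserving_inv μ)
  have h1 : MemLp (fun y => g (y⁻¹ * w)) 2 μ := hg.comp_measurePreserving hmp
  have h2 : nrm μ (fun y => g (y⁻¹ * w)) = nrm μ g := by
    unfold nrm
    congr 1
    exact eLpNorm_comp_measurePreserving hg.1 hmp
  rw [← h2]
  refine le_trans (le_of_eq ?_) (integral_norm_mul2 μ hf h1)
  refine integral_congr_ae (ae_of_all _ fun y => ?_)
  simp only [norm_mul, Circle.norm_coe, mul_one]

theorem tform_right {U : X → X → Circle} (hU : Measurable (Function.uncurry U))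
    {f g h : X → ℂ} (hf : MemLp f 2 μ) (hg : MemLp g 2 μ) (hh : MemLp h 2 μ) :
    AEStronglyMeasurable (conv μ U f g) μ ∧ 
    tform μ U f g h = ∫ w, conv μ U f g w * h w ∂μ := by
  have hmp : MeasurePreserving (fun p : X × X => (p.2, p.2⁻¹ * p.1)) (μ.prod μ) (μ.prod μ) :=
    mp_of_hom (μ.prod μ) (μ.prod μ) _ (fun p q => by
      ext <;> simp [mul_mul_mul_comm, mul_comm]) (by fun_prop)
      (fun p => (p.1 * p.2, p.1)) (fun x => by simp)
  have hU' : Measurable fun p : X × X => ((U p.1 p.2 : Circle) : ℂ) := circle_coe_meas.comp hU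
  constructor
  · have : AEStronglyMeasurable (fun p : X × X => f p.2 * g (p.2⁻¹ * p.1) * U p.2 (p.2⁻¹ * p.1))
        (μ.prod μ) := by
      have h0 : AEStronglyMeasurable (fun p : X × X => f p.1 * g p.2 * U p.1 p.2) (μ.prod μ) :=
        (hf.1.comp_fst.mul hg.1.comp_snd).mul hU'.aestronglyMeasurable
      exact h0.comp_measurePreserving hmp
    exact this.integral_prod_right'
  · have hIntg := tri_int μ hU hf hg hh
    have e1 : tform μ U f g h = ∫ p : X × X, (fun p : X × X => f p.1 * g p.2 * U p.1 p.2 * h (p.1 * p.2))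
        (p.2, p.2⁻¹ * p.1) ∂(μ.prod μ) := by
      unfold tform
      conv_lhs => rw [← hmp.map_eq]
      exact integral_map hmp.measurable.aemeasurable (by rw [hmp.map_eq]; exact hIntg.1)
    have hIntg2 := hmp.integrable_comp_of_integrable hIntg
    refine e1.trans ((integral_prod _ hIntg2).trans ?_)
    refine integral_congr_ae (ae_of_all _ fun w => ?_)
    simp only [conv, Function.comp_def]
    rw [← integral_mul_const]
    simp only [mul_inv_cancel_left]

end Gelf


section Gelf2
variable {X : Type} [CommGroup X] [TopologicalSpace X] [IsTopologicalGroup X]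
  [CompactSpace X] [SecondCountableTopology X] [MeasurableSpace X] [BorelSpace X]
variable (μ : Measure X) [IsProbabilityMeasure μ] [μ.IsHaarMeasure]
variable {U : X → X → Circle}

theorem star_int {Z : Type} [MeasurableSpace Z] (ρ : Measure Z) (f : Z → ℂ) :
    star (∫ z, f z ∂ρ) = ∫ z, star (f z) ∂ρ := integral_conj.symm

theorem kop_congr {φ φ' f f' : X → ℂ} (h1 : φ =ᵐ[μ] φ') (h2 : f =ᵐ[μ] f') (x : X) :
    kop μ U φ f x = kop μ U φ' f' x := by
  unfold kop
  apply integral_congr_ae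
  have h3 := (measurePreserving_mul_left μ x).quasiMeasurePreserving.ae h2
  filter_upwards [h1, h3] with y e1 e2
  rw [e1, e2]

theorem kop_aesm (hU : Measurable (Function.uncurry U)) {φ f : X → ℂ} (hφ : MemLp φ 2 μ)
    (hf : MemLp f 2 μ) : AEStronglyMeasurable (kop μ U φ f) μ := by
  have hm : MeasurePreserving (fun p : X × X => p.1 * p.2) (μ.prod μ) μ :=
    mp_of_hom (μ.prod μ) μ _ (fun p q => by simp [mul_mul_mul_comm]) (by fun_prop)
      (fun x => (x, 1)) (fun x => by simp)
  have hae : AEStronglyMeasurable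
      (fun p : X × X => φ p.2 * U p.1 p.2 * f (p.1 * p.2)) (μ.prod μ) := by
    refine (hφ.1.comp_snd.mul ?_).mul (hf.1.comp_measurePreserving hm)
    exact (circle_coe_meas.comp hU).aestronglyMeasurable
  exact hae.integral_prod_right'

theorem kop_memLp (hU : Measurable (Function.uncurry U)) {φ f : X → ℂ} (hφ : MemLp φ 2 μ)
    (hf : MemLp f 2 μ) : MemLp (kop μ U φ f) 2 μ :=
  MemLp.of_bound (kop_aesm μ hU hφ hf) _ (ae_of_all _ (kop_bound μ hU hφ hf))

theorem kop_kop (hU : Measurable (Function.uncurry U)) {φ ψ f : X → ℂ} (hφ : MemLp φ 2 μ)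
    (hψ : MemLp ψ 2 μ) (hf : MemLp f 2 μ) {x : X}
    (hx : ∀ᵐ p ∂(μ.prod μ), U x p.1 * U (x * p.1) p.2 = U p.1 p.2 * U x (p.1 * p.2)) :
    kop μ U φ (kop μ U ψ f) x = tform μ U φ ψ (fun w => U x w * f (x * w)) := by
  have hUx : Measurable (U x) := hU.comp (by fun_prop : Measurable fun y => (x, y))
  rw [tform_left μ hU hφ hψ (memLp_circle_mul μ (memLp_trans μ hf x) hUx)]
  unfold kop
  apply integral_congr_ae
  filter_upwards [Measure.ae_ae_of_ae_prod hx] with y hy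
  rw [mul_assoc, ← integral_const_mul]
  congr 1
  apply integral_congr_ae
  filter_upwards [hy] with z hz
  have hz' : (U x y : ℂ) * U (x * y) z = U y z * U x (y * z) := by
    rw [← Circle.coe_mul, hz, Circle.coe_mul]
  rw [mul_assoc x y z]
  linear_combination (ψ z * f (x * (y * z))) * hz'

theorem tform_symm {φ ψ f : X → ℂ} (hS : ∀ᵐ p ∂(μ.prod μ), U p.1 p.2 = U p.2 p.1) :
    tform μ U φ ψ f = tform μ U ψ φ f := by
  unfold tform
  rw [← integral_prod_swap]
  apply integral_congr_ae
  filter_upwards [hS] with p hp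
  simp only [Prod.fst_swap, Prod.snd_swap]
  rw [hp, mul_comm p.2 p.1]
  ring

theorem tform_adj (hU : Measurable (Function.uncurry U)) {f φ g : X → ℂ} {κ : X → Circle}
    (hf : MemLp f 2 μ) (hφ : MemLp φ 2 μ) (hg : MemLp g 2 μ)
    (hκ : ∀ᵐ p ∂(μ.prod μ), U p.1 p.2 * U (p.1 * p.2) p.2⁻¹ = κ p.2) :
    tform μ U (fun x => star (f x)) φ g = star (tform μ U (fun x => star (g x))
      (fun y => star (φ y⁻¹) * star (κ y : ℂ)) f) := by
  have hmp : MeasurePreserving (fun p : X × X => (p.1 * p.2, p.2⁻¹)) (μ.prod μ) (μ.prod μ) :=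
    mp_of_hom (μ.prod μ) (μ.prod μ) _ (fun p q => by
      ext <;> simp [mul_mul_mul_comm, mul_comm]) (by fun_prop)
      (fun p => (p.1 * p.2, p.2⁻¹)) (fun x => by simp)
  have hf' : MemLp (fun x => star (f x)) 2 μ := hf.star
  have hIntg := tri_int μ hU hf' hφ hg
  unfold tform
  conv_lhs => rw [← hmp.map_eq]
  refine (integral_map hmp.measurable.aemeasurable (by rw [hmp.map_eq]; exact hIntg.1)).trans ?_
  rw [star_int]
  apply integral_congr_ae
  filter_upwards [hκ] with p hp
  have h1 : U (p.1 * p.2) p.2⁻¹ = (U p.1 p.2)⁻¹ * κ p.2 := by rw [← hp]; simp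
  rw [h1, Circle.coe_mul, Circle.coe_inv_eq_conj]
  simp only [mul_inv_cancel_right, RCLike.star_def, map_mul, RCLike.conj_conj]
  ring

/-- The twisted convolution operators on `L²`. -/
def Kop (μ : Measure X) [IsProbabilityMeasure μ] [μ.IsHaarMeasure]
    {U : X → X → Circle} (hU : Measurable (Function.uncurry U)) :
    Lp ℂ 2 μ →L[ℂ] Lp ℂ 2 μ →L[ℂ] Lp ℂ 2 μ :=
  LinearMap.mkContinuous₂
    (LinearMap.mk₂ ℂ (fun φ f => (kop_memLp μ hU (Lp.memLp φ) (Lp.memLp f)).toLp _)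
      (by
        intro φ ψ f
        rw [← MemLp.toLp_add]
        apply MemLp.toLp_congr
        refine ae_of_all _ fun x => ?_
        rw [kop_congr μ (Lp.coeFn_add φ ψ) (ae_eq_refl f)]
        simp only [kop, Pi.add_apply, add_mul]
        exact integral_add (kop_integrable μ hU (Lp.memLp φ) (Lp.memLp f) x)
          (kop_integrable μ hU (Lp.memLp ψ) (Lp.memLp f) x))
      (by
        intro c φ f
        rw [← MemLp.toLp_const_smul]
        apply MemLp.toLp_congr
        refine ae_of_all _ fun x => ?_
        rw [kop_congr μ (Lp.coeFn_smul c φ) (ae_eq_refl f)]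
        simp only [kop, Pi.smul_apply, smul_eq_mul, mul_assoc]
        exact integral_const_mul _ _)
      (by
        intro φ f g
        rw [← MemLp.toLp_add]
        apply MemLp.toLp_congr
        refine ae_of_all _ fun x => ?_
        rw [kop_congr μ (ae_eq_refl φ) (Lp.coeFn_add f g)]
        simp only [kop, Pi.add_apply, mul_add]
        exact integral_add (kop_integrable μ hU (Lp.memLp φ) (Lp.memLp f) x)
          (kop_integrable μ hU (Lp.memLp φ) (Lp.memLp g) x))
      (by
        intro c φ f
        rw [← MemLp.toLp_const_smul]
        apply MemLp.toLp_congr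
        refine ae_of_all _ fun x => ?_
        rw [kop_congr μ (ae_eq_refl φ) (Lp.coeFn_smul c f)]
        simp only [kop, Pi.smul_apply, smul_eq_mul, mul_left_comm _ c]
        exact integral_const_mul _ _))
    1 (by
      intro φ f
      rw [one_mul]
      simp only [LinearMap.mk₂_apply]
      rw [Lp.norm_toLp]
      refine ENNReal.toReal_le_of_le_ofReal (by positivity) ?_
      refine (eLpNorm_le_of_ae_bound (C := ‖φ‖ * ‖f‖)
        (ae_of_all _ (kop_bound μ hU (Lp.memLp φ) (Lp.memLp f)))).trans ?_
      simp)

theorem Kop_coe (hU : Measurable (Function.uncurry U)) (φ f : Lp ℂ 2 μ) :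
    Kop μ hU φ f =ᵐ[μ] kop μ U φ f :=
  (kop_memLp μ hU (Lp.memLp φ) (Lp.memLp f)).coeFn_toLp

theorem Kop_Kop (hU : Measurable (Function.uncurry U))
    (hQ : ∀ᵐ x ∂μ, ∀ᵐ p ∂(μ.prod μ),
      U x p.1 * U (x * p.1) p.2 = U p.1 p.2 * U x (p.1 * p.2)) (φ ψ f : Lp ℂ 2 μ) :
    ∀ᵐ x ∂μ, Kop μ hU φ (Kop μ hU ψ f) x = tform μ U φ ψ (fun w => U x w * f (x * w)) := by
  filter_upwards [Kop_coe μ hU φ (Kop μ hU ψ f), hQ] with x hx hq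
  rw [hx, kop_congr μ (ae_eq_refl φ) (Kop_coe μ hU ψ f)]
  exact kop_kop μ hU (Lp.memLp φ) (Lp.memLp ψ) (Lp.memLp f) hq

theorem Kop_comm (hU : Measurable (Function.uncurry U))
    (hQ : ∀ᵐ x ∂μ, ∀ᵐ p ∂(μ.prod μ),
      U x p.1 * U (x * p.1) p.2 = U p.1 p.2 * U x (p.1 * p.2))
    (hS : ∀ᵐ p ∂(μ.prod μ), U p.1 p.2 = U p.2 p.1) (φ ψ : Lp ℂ 2 μ) :
    Kop μ hU φ * Kop μ hU ψ = Kop μ hU ψ * Kop μ hU φ := by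
  refine ContinuousLinearMap.ext fun f => Lp.ext ?_
  filter_upwards [Kop_Kop μ hU hQ φ ψ f, Kop_Kop μ hU hQ ψ φ f] with x h1 h2
  exact h1.trans ((tform_symm μ hS).trans h2.symm)

theorem Kop_mul (hU : Measurable (Function.uncurry U))
    (hQ : ∀ᵐ x ∂μ, ∀ᵐ p ∂(μ.prod μ),
      U x p.1 * U (x * p.1) p.2 = U p.1 p.2 * U x (p.1 * p.2)) (φ ψ : Lp ℂ 2 μ) :
    ∃ η : Lp ℂ 2 μ, Kop μ hU φ * Kop μ hU ψ = Kop μ hU η ∧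
      ∀ h : Lp ℂ 2 μ, ∫ x, η x * h x ∂μ = ∫ x, φ x * Kop μ hU ψ h x ∂μ := by
  have hm := (tform_right μ hU (Lp.memLp φ) (Lp.memLp ψ) (Lp.memLp φ)).1
  have hL : MemLp (conv μ U φ ψ) 2 μ :=
    MemLp.of_bound hm _ (ae_of_all _ (conv_bound μ (Lp.memLp φ) (Lp.memLp ψ)))
  have hη := hL.coeFn_toLp
  refine ⟨hL.toLp _, ?_, ?_⟩
  · refine ContinuousLinearMap.ext fun f => Lp.ext ?_
    filter_upwards [Kop_Kop μ hU hQ φ ψ f, Kop_coe μ hU (hL.toLp _) f] with x h1 h2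
    refine Eq.trans (b := Kop μ hU φ (Kop μ hU ψ f) x) rfl ?_
    rw [h1, h2, kop_congr μ hη (ae_eq_refl f)]
    have hUx : Measurable (U x) := hU.comp (by fun_prop : Measurable fun y => (x, y))
    rw [(tform_right μ hU (Lp.memLp φ) (Lp.memLp ψ)
      (memLp_circle_mul μ (memLp_trans μ (Lp.memLp f) x) hUx)).2]
    simp only [kop, mul_assoc]
  · intro h
    have e1 : ∫ x, (hL.toLp _ : Lp ℂ 2 μ) x * h x ∂μ = tform μ U φ ψ h := by
      rw [(tform_right μ hU (Lp.memLp φ) (Lp.memLp ψ) (Lp.memLp h)).2]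
      apply integral_congr_ae
      filter_upwards [hη] with x hx
      rw [hx]
    rw [e1, tform_left μ hU (Lp.memLp φ) (Lp.memLp ψ) (Lp.memLp h)]
    apply integral_congr_ae
    filter_upwards [Kop_coe μ hU ψ h] with x hx
    rw [hx]

theorem Kop_star (hU : Measurable (Function.uncurry U)) {κ : X → Circle} (hκm : Measurable κ)
    (hκ : ∀ᵐ p ∂(μ.prod μ), U p.1 p.2 * U (p.1 * p.2) p.2⁻¹ = κ p.2) (φ : Lp ℂ 2 μ) :
    ∃ φ' : Lp ℂ 2 μ, star (Kop μ hU φ) = Kop μ hU φ' := by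
  have h1 : MemLp (fun y => star (φ y⁻¹)) 2 μ :=
    ((Lp.memLp φ).comp_measurePreserving (Measure.measurePreserving_inv μ)).star
  have h2 : MemLp (fun y => star (φ y⁻¹) * star (κ y : ℂ)) 2 μ := by
    have := memLp_circle_mul μ h1 hκm.inv
    refine this.ae_eq (ae_of_all _ fun y => ?_)
    simp only [Pi.inv_apply, Circle.coe_inv_eq_conj, RCLike.star_def]
    rw [mul_comm]
  refine ⟨h2.toLp _, ?_⟩
  rw [ContinuousLinearMap.star_eq_adjoint]
  symm
  rw [ContinuousLinearMap.eq_adjoint_iff]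
  intro f g
  have e1 : inner ℂ f (Kop μ hU φ g) = tform μ U (fun x => star (f x)) φ g := by
    have hf' : MemLp (fun x => star (f x)) 2 μ := (Lp.memLp f).star
    rw [L2.inner_def, tform_left μ hU hf' (Lp.memLp φ) (Lp.memLp g)]
    apply integral_congr_ae
    filter_upwards [Kop_coe μ hU φ g] with x hx
    rw [hx, RCLike.inner_apply, mul_comm]
    rfl
  have e2 : inner ℂ (Kop μ hU (h2.toLp _) f) g = star (tform μ U (fun x => star (g x))
      (fun y => star (φ y⁻¹) * star (κ y : ℂ)) f) := by
    have hg' : MemLp (fun x => star (g x)) 2 μ := (Lp.memLp g).star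
    rw [L2.inner_def, tform_left μ hU hg' h2 (Lp.memLp f), star_int]
    apply integral_congr_ae
    filter_upwards [Kop_coe μ hU (h2.toLp _) f] with x hx
    rw [hx, RCLike.inner_apply, kop_congr μ h2.coeFn_toLp (ae_eq_refl f)]
    simp
  rw [e1, e2]
  exact (tform_adj μ hU (Lp.memLp f) (Lp.memLp φ) (Lp.memLp g) hκ).symm

end Gelf2


theorem exists_char_abstract {A E : Type} [CStarAlgebra A] [NormedAddCommGroup E] [NormedSpace ℂ E]
    (K : E →L[ℂ] A) (hcomm : ∀ φ ψ, K φ * K ψ = K ψ * K φ)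
    (hstar : ∀ φ, ∃ φ', star (K φ) = K φ') {φ₀ : E} (h0 : K φ₀ ≠ 0) :
    ∃ ℓ : E →L[ℂ] ℂ, ℓ ≠ 0 ∧ ∀ φ ψ η, K φ * K ψ = K η → ℓ η = ℓ φ * ℓ ψ := by
  let S := StarAlgebra.adjoin ℂ (Set.range K)
  have hSc : IsMulCommutative S := by
    apply StarAlgebra.isMulCommutative_adjoin
    · rintro _ ⟨φ, rfl⟩ _ ⟨ψ, rfl⟩
      exact hcomm φ ψ
    · rintro _ ⟨φ, rfl⟩ _ ⟨ψ, rfl⟩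
      obtain ⟨ψ', hψ'⟩ := hstar ψ
      rw [hψ']
      exact hcomm φ ψ'
  let B := S.topologicalClosure
  have hBcl : IsClosed (B : Set A) := S.isClosed_topologicalClosure
  have hBc : ∀ x y : B, x * y = y * x :=
    (StarSubalgebra.commRingTopologicalClosure S (fun x y => mul_comm' x y)).mul_comm
  let _ : CStarAlgebra B := StarSubalgebra.cstarAlgebra B
  let _ : CommCStarAlgebra B := { (inferInstance : CStarAlgebra B) with mul_comm := hBc }
  let KB : E →L[ℂ] B := K.codRestrict (Subalgebra.toSubmodule B.toSubalgebra) (fun φ =>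
    S.le_topologicalClosure (StarAlgebra.subset_adjoin ℂ _ ⟨φ, rfl⟩))
  have h0' : KB φ₀ ≠ 0 := fun h => h0 (congrArg Subtype.val h)
  have h1 : WeakDual.gelfandTransform ℂ B (KB φ₀) ≠ 0 := by
    intro h
    exact h0' ((gelfandTransform_isometry B).injective (h.trans (map_zero _).symm))
  obtain ⟨Φ, hΦ⟩ := DFunLike.ne_iff.1 h1
  let Ψ : B →L[ℂ] ℂ := WeakDual.CharacterSpace.toCLM Φ
  have hΨ : ∀ x y : B, Ψ (x * y) = Ψ x * Ψ y := fun x y => map_mul Φ x y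
  refine ⟨Ψ.comp KB, ?_, ?_⟩
  · intro h
    apply hΦ
    exact DFunLike.congr_fun h φ₀
  · intro φ ψ η h
    have : KB φ * KB ψ = KB η := Subtype.ext h
    change Ψ (KB η) = Ψ (KB φ) * Ψ (KB ψ)
    rw [← hΨ, this]

section Gelf3
variable {X : Type} [CommGroup X] [TopologicalSpace X] [IsTopologicalGroup X]
  [CompactSpace X] [SecondCountableTopology X] [MeasurableSpace X] [BorelSpace X]
variable (μ : Measure X) [IsProbabilityMeasure μ] [μ.IsHaarMeasure]
variable {U : X → X → Circle}

theorem gelfand_step (hU : Measurable (Function.uncurry U))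
    (hQ : ∀ᵐ x ∂μ, ∀ᵐ p ∂(μ.prod μ),
      U x p.1 * U (x * p.1) p.2 = U p.1 p.2 * U x (p.1 * p.2))
    (hS : ∀ᵐ p ∂(μ.prod μ), U p.1 p.2 = U p.2 p.1) {κ : X → Circle} (hκm : Measurable κ)
    (hκ : ∀ᵐ p ∂(μ.prod μ), U p.1 p.2 * U (p.1 * p.2) p.2⁻¹ = κ p.2)
    {φ₀ : Lp ℂ 2 μ} (h0 : Kop μ hU φ₀ ≠ 0) :
    ∃ v : Lp ℂ 2 μ, v ≠ 0 ∧ ∀ ψ : X → ℂ, MemLp ψ 2 μ →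
      ∀ᵐ x ∂μ, kop μ U ψ v x = (∫ y, ψ y * v y ∂μ) * v x := by
  obtain ⟨ℓ, hℓ, hmul⟩ := exists_char_abstract (Kop μ hU) (Kop_comm μ hU hQ hS)
    (Kop_star μ hU hκm hκ) h0
  let u : Lp ℂ 2 μ := (InnerProductSpace.toDual ℂ _).symm ℓ
  have hu : ∀ φ, ℓ φ = inner ℂ u φ := fun φ => by
    simp only [u, InnerProductSpace.toDual_symm_apply]
  let v : Lp ℂ 2 μ := star u
  have hv : ∀ᵐ x ∂μ, v x = star (u x) := Lp.coeFn_star u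
  have hIntg : ∀ φ : Lp ℂ 2 μ, ℓ φ = ∫ y, φ y * v y ∂μ := by
    intro φ
    rw [hu, L2.inner_def]
    apply integral_congr_ae
    filter_upwards [hv] with x hx
    rw [hx, RCLike.inner_apply]
    rfl
  refine ⟨v, ?_, ?_⟩
  · intro h
    apply hℓ
    ext φ
    rw [hIntg, h]
    have : (fun y => φ y * (0 : Lp ℂ 2 μ) y) =ᵐ[μ] 0 := by
      filter_upwards [Lp.coeFn_zero ℂ 2 μ] with y hy
      rw [hy]; simp
    rw [integral_congr_ae this]
    simp
  · intro ψ hψ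
    have key : Kop μ hU (hψ.toLp ψ) v = ℓ (hψ.toLp ψ) • v := by
      apply ext_inner_left ℂ
      intro w
      obtain ⟨η, hη, hη2⟩ := Kop_mul μ hU hQ (star w) (hψ.toLp ψ)
      have h1 := hmul _ _ _ hη
      have hw : ∀ᵐ x ∂μ, (star w : Lp ℂ 2 μ) x = star (w x) := Lp.coeFn_star w
      have e1 : ∀ f : Lp ℂ 2 μ, inner ℂ w f = ∫ x, (star w : Lp ℂ 2 μ) x * f x ∂μ := by
        intro f
        rw [L2.inner_def]
        apply integral_congr_ae
        filter_upwards [hw] with x hx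
        rw [hx, RCLike.inner_apply, mul_comm]
        rfl
      rw [inner_smul_right, e1, e1, ← hη2, ← hIntg, ← hIntg, h1, mul_comm]
    have e2 : ℓ (hψ.toLp ψ) = ∫ y, ψ y * v y ∂μ := by
      rw [hIntg]
      apply integral_congr_ae
      filter_upwards [hψ.coeFn_toLp] with x hx
      rw [hx]
    rw [e2] at key
    filter_upwards [Kop_coe μ hU (hψ.toLp ψ) v, Lp.coeFn_smul (∫ y, ψ y * v y ∂μ) v] with x h1 h2
    rw [kop_congr μ hψ.coeFn_toLp (ae_eq_refl v)] at h1
    rw [← h1, key, h2]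
    rfl

end Gelf3


theorem cg_aux1 {M : Type*} [CommGroup M] {a b c d e f : M} (h1 : a * b = c * d)
    (h2 : b * e = f * c) : d * e = a * f := by
  rw [← mul_right_inj (b * c)]
  calc b * c * (d * e) = (c * d) * (b * e) := by ac_rfl
    _ = b * c * (a * f) := by rw [← h1, h2]; ac_rfl

section Gelf4
variable {X : Type} [CommGroup X] [TopologicalSpace X] [IsTopologicalGroup X]
  [CompactSpace X] [SecondCountableTopology X] [MeasurableSpace X] [BorelSpace X]
variable (μ : Measure X) [IsProbabilityMeasure μ] [μ.IsHaarMeasure]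
variable {U : X → X → Circle}

theorem kappa_exists (hU : Measurable (Function.uncurry U))
    (hQ : ∀ᵐ p ∂(μ.prod (μ.prod μ)),
      U p.1 p.2.1 * U (p.1 * p.2.1) p.2.2 = U p.2.1 p.2.2 * U p.1 (p.2.1 * p.2.2))
    (hS : ∀ᵐ p ∂(μ.prod μ), U p.1 p.2 = U p.2 p.1) :
    ∃ κ : X → Circle, Measurable κ ∧
      ∀ᵐ p ∂(μ.prod μ), U p.1 p.2 * U (p.1 * p.2) p.2⁻¹ = κ p.2 := by
  have m1 : MeasurePreserving (fun p : X × X × X => (p.1, p.2.2, p.2.1))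
      (μ.prod (μ.prod μ)) (μ.prod (μ.prod μ)) :=
    mp_of_hom _ _ _ (fun p q => rfl) (by fun_prop) (fun p => (p.1, p.2.2, p.2.1)) (fun p => rfl)
  have m2 : MeasurePreserving (fun p : X × X × X => p.2) (μ.prod (μ.prod μ)) (μ.prod μ) :=
    mp_of_hom _ _ _ (fun p q => rfl) (by fun_prop) (fun p => (1, p)) (fun p => rfl)
  have m3 : MeasurePreserving (fun p : X × X × X => (p.1 * p.2.1, p.2.2, p.2.1⁻¹))
      (μ.prod (μ.prod μ)) (μ.prod (μ.prod μ)) :=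
    mp_of_hom _ _ _ (fun p q => by ext <;> simp [mul_mul_mul_comm, mul_comm]) (by fun_prop)
      (fun p => (p.1 * p.2.2, p.2.2⁻¹, p.2.1)) (fun p => by simp)
  have F1 : ∀ᵐ p ∂(μ.prod (μ.prod μ)),
      U p.1 p.2.1 * U (p.1 * p.2.1) p.2.2 = U p.1 p.2.2 * U (p.1 * p.2.2) p.2.1 := by
    filter_upwards [hQ, m1.quasiMeasurePreserving.ae hQ, m2.quasiMeasurePreserving.ae hS]
      with p h1 h2 h3
    rw [h1, h2, h3, mul_comm p.2.1]
  have ht : ∀ᵐ p ∂(μ.prod (μ.prod μ)), U (p.1 * p.2.2) p.2.1 * U (p.1 * p.2.2 * p.2.1) p.2.1⁻¹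
      = U p.1 p.2.1 * U (p.1 * p.2.1) p.2.1⁻¹ := by
    filter_upwards [F1, m3.quasiMeasurePreserving.ae F1] with p h1 h2
    simp only [mul_inv_cancel_right] at h2
    rw [mul_right_comm p.1 p.2.2 p.2.1]
    exact cg_aux1 h1 h2
  obtain ⟨x₀, hx₀⟩ := (Measure.ae_ae_of_ae_prod ht).exists
  refine ⟨fun y => U x₀ y * U (x₀ * y) y⁻¹, ?_, ?_⟩
  · exact (hU.comp (by fun_prop : Measurable fun y : X => (x₀, y))).mul
      (hU.comp (by fun_prop : Measurable fun y : X => (x₀ * y, y⁻¹)))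
  · have m4 : MeasurePreserving (fun p : X × X => (p.2, x₀⁻¹ * p.1)) (μ.prod μ) (μ.prod μ) :=
      ((MeasurePreserving.id μ).prod (measurePreserving_mul_left μ x₀⁻¹)).comp
        Measure.measurePreserving_swap
    filter_upwards [m4.quasiMeasurePreserving.ae hx₀] with p hp
    simpa only [mul_inv_cancel_left] using hp

end Gelf4

section Gelf5
variable {ι : Type} [Countable ι]

theorem gelfand_main (μ : Measure (ι → Circle)) [IsProbabilityMeasure μ] [μ.IsHaarMeasure]
    {U : (ι → Circle) → (ι → Circle) → Circle} (hU : Measurable (Function.uncurry U))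
    (hQ : ∀ᵐ p ∂(μ.prod (μ.prod μ)),
      U p.1 p.2.1 * U (p.1 * p.2.1) p.2.2 = U p.2.1 p.2.2 * U p.1 (p.2.1 * p.2.2))
    (hS : ∀ᵐ p ∂(μ.prod μ), U p.1 p.2 = U p.2 p.1) :
    ∃ v : (ι → Circle) → Circle, Measurable v ∧
      ∀ᵐ p ∂(μ.prod μ), U p.1 p.2 * v (p.1 * p.2) = v p.1 * v p.2 := by
  obtain ⟨κ, hκm, hκ⟩ := kappa_exists μ hU hQ hS
  have hUx : ∀ x, Measurable (U x) := fun x =>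
    hU.comp (by fun_prop : Measurable fun y => (x, y))
  obtain ⟨φ₀, hφ₀⟩ : ∃ φ₀ : Lp ℂ 2 μ, Kop μ hU φ₀ ≠ 0 := by
    by_contra! hcon
    have h1 : MemLp (fun _ : ι → Circle => (1 : ℂ)) 2 μ := memLp_const 1
    have : ∀ n : ι →₀ ℤ, ∀ᵐ x ∂μ, ∫ y, (U x y : ℂ) * chr n y ∂μ = 0 := by
      intro n
      have hc := circle_memLp μ (chr_measurable n) 2
      have h2 := Kop_coe μ hU (hc.toLp _) (h1.toLp _)
      rw [hcon] at h2
      filter_upwards [h2, Lp.coeFn_zero ℂ 2 μ] with x hx hx0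
      rw [kop_congr μ hc.coeFn_toLp h1.coeFn_toLp] at hx
      have h3 : kop μ U (fun z => (chr n z : ℂ)) (fun _ => 1) x = 0 := by
        rw [← hx]; exact hx0
      rw [← h3]
      unfold kop
      simp only [mul_one, mul_comm]
    obtain ⟨x, hx⟩ := (ae_all_iff.2 this).exists
    obtain ⟨y, hy⟩ := (chr_complete μ (circle_integrable μ (hUx x)) hx).exists
    have := Circle.norm_coe (U x y)
    rw [show ((U x y : Circle) : ℂ) = 0 from hy] at this
    simp at this
  obtain ⟨v, hv0, hv⟩ := gelfand_step μ hU (Measure.ae_ae_of_ae_prod hQ) hS hκm hκ hφ₀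
  have hvm : Measurable v := (Lp.stronglyMeasurable v).measurable
  have hvi : Integrable v μ := (Lp.memLp v).integrable (by norm_num)
  have hmain : ∀ᵐ x ∂μ, ∀ᵐ y ∂μ, (U x y : ℂ) * v (x * y) = v x * v y := by
    have hv' := ae_all_iff.2 fun n : ι →₀ ℤ => hv _ (circle_memLp μ (chr_measurable n) 2)
    filter_upwards [hv'] with x hx
    have hi1 : Integrable (fun y => (U x y : ℂ) * v (x * y)) μ :=
      (memLp_circle_mul μ (memLp_trans μ (Lp.memLp v) x) (hUx x)).integrable (by norm_num)
    have hi2 : Integrable (fun y => v x * v y) μ := hvi.const_mul _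
    have hz := chr_complete μ (hi1.sub hi2) ?_
    · filter_upwards [hz] with y hy
      exact sub_eq_zero.1 hy
    · intro n
      have j1 : Integrable (fun y => (U x y : ℂ) * v (x * y) * chr n y) μ :=
        (kop_integrable μ hU (circle_memLp μ (chr_measurable n) 2) (Lp.memLp v) x).congr
          (ae_of_all _ fun y => by ring)
      have j2 : Integrable (fun y => v x * v y * chr n y) μ :=
        ((integrable_mul2 μ (circle_memLp μ (chr_measurable n) 2) (Lp.memLp v)).const_mul
          (v x)).congr (ae_of_all _ fun y => by ring)
      have e : ∀ y, ((fun y => (U x y : ℂ) * v (x * y)) - (fun y => v x * v y)) y * chr n y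
          = (U x y : ℂ) * v (x * y) * chr n y - v x * v y * chr n y := fun y => sub_mul _ _ _
      refine (integral_congr_ae (ae_of_all _ e)).trans ?_
      rw [integral_sub j1 j2, sub_eq_zero]
      have hxn := hx n
      rw [mul_comm, ← integral_const_mul] at hxn
      unfold kop at hxn
      refine Eq.trans ?_ (hxn.trans ?_)
      · exact integral_congr_ae (ae_of_all _ fun y => by ring)
      · exact integral_congr_ae (ae_of_all _ fun y => by ring)
  have hM : ∫ y, ‖v y‖ ∂μ ≠ 0 := by
    intro h
    rw [integral_eq_zero_iff_of_nonneg (fun _ => norm_nonneg _) hvi.norm] at h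
    apply hv0
    apply Lp.ext
    filter_upwards [h, Lp.coeFn_zero ℂ 2 μ] with x hx h0
    rw [h0]
    exact norm_eq_zero.1 hx
  have hnorm : ∀ᵐ x ∂μ, ‖v x‖ = 1 := by
    filter_upwards [hmain] with x hx
    have h1 : ∫ y, ‖v (x * y)‖ ∂μ = ∫ y, ‖v x‖ * ‖v y‖ ∂μ := by
      apply integral_congr_ae
      filter_upwards [hx] with y hy
      have := congrArg norm hy
      rwa [norm_mul, norm_mul, Circle.norm_coe, one_mul] at this
    rw [integral_mul_left_eq_self (fun y => ‖v y‖) x, integral_const_mul] at h1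
    have := mul_right_cancel₀ hM ((one_mul _).trans h1)
    exact this.symm
  let w : (ι → Circle) → Circle := fun x => Circle.exp (Complex.arg (v x))
  have hwm : Measurable w :=
    (Circle.exp.continuous.measurable).comp (Complex.measurable_arg.comp hvm)
  have hwv : ∀ᵐ x ∂μ, (w x : ℂ) = v x := by
    filter_upwards [hnorm] with x hx
    have := Complex.norm_mul_exp_arg_mul_I (v x)
    rw [hx] at this
    simp only [w, Circle.coe_exp]
    simpa using this
  refine ⟨w, hwm, ?_⟩
  have hmeas : MeasurableSet {p : (ι → Circle) × (ι → Circle) | U p.1 p.2 * w (p.1 * p.2) = w p.1 * w p.2} := by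
    refine measurableSet_eq_fun (hU.mul (hwm.comp (by fun_prop))) ?_
    exact (hwm.comp measurable_fst).mul (hwm.comp measurable_snd)
  rw [Measure.ae_prod_iff_ae_ae hmeas]
  filter_upwards [hmain, hwv] with x hx hwx
  have hwxy := (measurePreserving_mul_left μ x).quasiMeasurePreserving.ae hwv
  filter_upwards [hx, hwv, hwxy] with y hy h1 h2
  apply Circle.ext
  rw [Circle.coe_mul, Circle.coe_mul, h1, h2, hwx, hy]

end Gelf5


/-- second multiplicative difference -/
def D3 {X : Type} [Mul X] (f : X → Circle) (p : X × X × X) : Circle :=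
  f (p.1 * p.2.1) * f (p.1 * p.2.2) * (f p.1)⁻¹ * (f (p.1 * p.2.1 * p.2.2))⁻¹

theorem cg_aux2 {M : Type*} [CommGroup M] {k a b c d e f g h A : M}
    (h1 : a * b = A) (h2 : a = k * c * d) (h3 : b = k * e * f)
    (h4 : A = k * g * h) (h5 : g = c * e) (h6 : h = d * f) : k = 1 := by
  subst h5 h6 h2 h3
  rw [h4] at h1
  have : k * (k * (c * e * (d * f))) = 1 * (k * (c * e * (d * f))) := by
    rw [one_mul]
    calc k * (k * (c * e * (d * f))) = k * c * d * (k * e * f) := by ac_rfl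
      _ = _ := by rw [h1]; ac_rfl
  exact mul_right_cancel this

theorem cg_aux3 {M : Type*} [CommGroup M] {k a b c d A B : M}
    (h1 : a * b = A) (h2 : a = k * c) (h3 : b = k * d) (h4 : A = k * B) : B = k * c * d := by
  subst h2 h3
  rw [h4] at h1
  apply mul_left_cancel (a := k)
  rw [← h1]
  ac_rfl

section W1
variable {X : Type} [CommGroup X] [TopologicalSpace X] [IsTopologicalGroup X]
  [CompactSpace X] [SecondCountableTopology X] [MeasurableSpace X] [BorelSpace X]
variable (μ : Measure X) [IsProbabilityMeasure μ] [μ.IsHaarMeasure]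

theorem kappa_one {W : X × X × X → Circle} {k : Circle}
    (hA : ∀ᵐ p ∂(μ.prod (μ.prod (μ.prod μ))),
      W (p.1, p.2.1, p.2.2.2) * W (p.1 * p.2.1, p.2.2.1, p.2.2.2)
        = W (p.1, p.2.1 * p.2.2.1, p.2.2.2))
    (hs : ∀ᵐ p ∂(μ.prod (μ.prod μ)), W (p.1, p.2.1, p.2.2) = k * W (p.1, p.2.2, p.2.1)) :
    k = 1 := by
  have i2 : (μ.prod μ).IsHaarMeasure := inferInstance
  have i3 : (μ.prod (μ.prod μ)).IsHaarMeasure := Measure.prod.instIsHaarMeasure _ _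
  have i4 : (μ.prod (μ.prod (μ.prod μ))).IsHaarMeasure := Measure.prod.instIsHaarMeasure _ _
  have i5 : (μ.prod (μ.prod (μ.prod (μ.prod μ)))).IsHaarMeasure :=
    Measure.prod.instIsHaarMeasure _ _
  have m43 (f : X × X × X × X → X × X × X) (hmul : ∀ p q, f (p * q) = f p * f q)
      (hc : Continuous f) (s : X × X × X → X × X × X × X) (hs : ∀ p, f (s p) = p) :
      MeasurePreserving f (μ.prod (μ.prod (μ.prod μ))) (μ.prod (μ.prod μ)) :=
    mp_of_hom _ _ f hmul hc s hs
  have m54 (f : X × X × X × X × X → X × X × X × X) (hmul : ∀ p q, f (p * q) = f p * f q)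
      (hc : Continuous f) (s : X × X × X × X → X × X × X × X × X) (hs : ∀ p, f (s p) = p) :
      MeasurePreserving f (μ.prod (μ.prod (μ.prod (μ.prod μ)))) (μ.prod (μ.prod (μ.prod μ))) :=
    mp_of_hom _ _ f hmul hc s hs
  have s1 := (m43 (fun p => (p.1, p.2.1, p.2.2.2)) (fun p q => rfl) (by fun_prop)
    (fun p => (p.1, p.2.1, 1, p.2.2)) (fun p => rfl)).quasiMeasurePreserving.ae hs
  have s2 := (m43 (fun p => (p.1 * p.2.1, p.2.2.1, p.2.2.2))
    (fun p q => by ext <;> simp [mul_mul_mul_comm]) (by fun_prop)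
    (fun p => (p.1, 1, p.2.1, p.2.2)) (fun p => by simp)).quasiMeasurePreserving.ae hs
  have s3 := (m43 (fun p => (p.1, p.2.1 * p.2.2.1, p.2.2.2))
    (fun p q => by ext <;> simp [mul_mul_mul_comm]) (by fun_prop)
    (fun p => (p.1, 1, p.2.1, p.2.2)) (fun p => by simp)).quasiMeasurePreserving.ae hs
  have hA' : ∀ᵐ p ∂(μ.prod (μ.prod (μ.prod μ))),
      W (p.1, p.2.2.2, p.2.1 * p.2.2.1) = k * W (p.1, p.2.2.2, p.2.1) *
        W (p.1 * p.2.1, p.2.2.2, p.2.2.1) := by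
    filter_upwards [hA, s1, s2, s3] with p h1 h2 h3 h4
    exact cg_aux3 h1 h2 h3 h4
  have t1 := (m54 (fun q => (q.1, q.2.2.2.1, q.2.2.2.2, q.2.1 * q.2.2.1))
    (fun p q => by ext <;> simp [mul_mul_mul_comm]) (by fun_prop)
    (fun p => (p.1, 1, p.2.2.2, p.2.1, p.2.2.1)) (fun p => by simp)).quasiMeasurePreserving.ae hA
  have t2 := (m54 (fun q => (q.1, q.2.1, q.2.2.1, q.2.2.2.1))
    (fun p q => by ext <;> simp [mul_mul_mul_comm]) (by fun_prop)
    (fun p => (p.1, p.2.1, p.2.2.1, p.2.2.2, 1)) (fun p => by simp)).quasiMeasurePreserving.ae hA'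
  have t3 := (m54 (fun q => (q.1 * q.2.2.2.1, q.2.1, q.2.2.1, q.2.2.2.2))
    (fun p q => by ext <;> simp [mul_mul_mul_comm]) (by fun_prop)
    (fun p => (p.1, p.2.1, p.2.2.1, 1, p.2.2.2)) (fun p => by simp)).quasiMeasurePreserving.ae hA'
  have t4 := (m54 (fun q => (q.1, q.2.1, q.2.2.1, q.2.2.2.1 * q.2.2.2.2))
    (fun p q => by ext <;> simp [mul_mul_mul_comm]) (by fun_prop)
    (fun p => (p.1, p.2.1, p.2.2.1, 1, p.2.2.2)) (fun p => by simp)).quasiMeasurePreserving.ae hA'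
  have t5 := (m54 (fun q => (q.1, q.2.2.2.1, q.2.2.2.2, q.2.1))
    (fun p q => by ext <;> simp [mul_mul_mul_comm]) (by fun_prop)
    (fun p => (p.1, p.2.2.2, 1, p.2.1, p.2.2.1)) (fun p => by simp)).quasiMeasurePreserving.ae hA
  have t6 := (m54 (fun q => (q.1 * q.2.1, q.2.2.2.1, q.2.2.2.2, q.2.2.1))
    (fun p q => by ext <;> simp [mul_mul_mul_comm]) (by fun_prop)
    (fun p => (p.1, 1, p.2.2.2, p.2.1, p.2.2.1)) (fun p => by simp)).quasiMeasurePreserving.ae hA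
  obtain ⟨q, h1, h2, h3, h4, h5, h6⟩ :=
    (t1.and (t2.and (t3.and (t4.and (t5.and t6))))).exists
  simp only at h1 h2 h3 h4 h5 h6
  rw [mul_right_comm q.1 q.2.2.2.1 q.2.1] at h3
  exact cg_aux2 h1 h2 h3 h4 h5.symm h6.symm

end W1


theorem cg_aux4 {M : Type*} [CommGroup M] {a b c d w z : M}
    (h1 : a * w = b) (h2 : c * z = d) (h3 : w = z) : c * b = a * d := by
  subst h3 h1 h2
  exact mul_left_comm _ _ _

theorem cg_aux5 {M : Type*} [CommGroup M] {uxy uxr w vxy vr vxyr vxr vx : M}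
    (h1 : uxr * w = uxy) (h2 : uxy * vxyr = vxy * vr) (h3 : uxr * vxr = vx * vr) :
    w = vxy * vxr * vx⁻¹ * vxyr⁻¹ := by
  subst h1
  have e1 : vxy = uxr * w * vxyr * vr⁻¹ := by rw [h2, mul_inv_cancel_right]
  have e2 : vx = uxr * vxr * vr⁻¹ := by rw [h3, mul_inv_cancel_right]
  rw [e1, e2]
  simp only [mul_inv, inv_inv]
  calc w = w * (uxr * uxr⁻¹) * (vxyr * vxyr⁻¹) * (vr * vr⁻¹) * (vxr * vxr⁻¹) := by simp
    _ = _ := by ac_rfl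

section W1
variable {ι : Type} [Countable ι]
variable (μ : Measure (ι → Circle)) [IsProbabilityMeasure μ] [μ.IsHaarMeasure]

theorem lemmaE {W : (ι → Circle) × (ι → Circle) × (ι → Circle) → Circle} (hW : Measurable W)
    (hA : ∀ᵐ p ∂(μ.prod (μ.prod (μ.prod μ))),
      W (p.1, p.2.1, p.2.2.2) * W (p.1 * p.2.1, p.2.2.1, p.2.2.2)
        = W (p.1, p.2.1 * p.2.2.1, p.2.2.2))
    (hs : ∀ᵐ p ∂(μ.prod (μ.prod μ)), W (p.1, p.2.1, p.2.2) = W (p.1, p.2.2, p.2.1)) :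
    ∃ v : (ι → Circle) → Circle, Measurable v ∧
      ∀ᵐ p ∂(μ.prod (μ.prod μ)), W p = D3 v p := by
  have i2 : (μ.prod μ).IsHaarMeasure := inferInstance
  have i3 : (μ.prod (μ.prod μ)).IsHaarMeasure := Measure.prod.instIsHaarMeasure _ _
  have i4 : (μ.prod (μ.prod (μ.prod μ))).IsHaarMeasure := Measure.prod.instIsHaarMeasure _ _
  have hs4 := (mp_of_hom (μ.prod (μ.prod (μ.prod μ))) (μ.prod (μ.prod μ))
    (fun p : (ι → Circle) × (ι → Circle) × (ι → Circle) × (ι → Circle) =>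
      (p.1 * p.2.1, p.2.2.1, p.2.2.2))
    (fun p q => by ext <;> simp [mul_mul_mul_comm]) (by fun_prop)
    (fun p => (p.1, 1, p.2.1, p.2.2)) (fun p => by simp)).quasiMeasurePreserving.ae hs
  obtain ⟨x0, hA0, hs40, hs0⟩ := ((Measure.ae_ae_of_ae_prod hA).and
    ((Measure.ae_ae_of_ae_prod hs4).and (Measure.ae_ae_of_ae_prod hs))).exists
  simp only at hA0 hs40 hs0
  have m33 (f : (ι → Circle) × (ι → Circle) × (ι → Circle) → (ι → Circle) × (ι → Circle) × (ι → Circle)) (hmul : ∀ p q, f (p * q) = f p * f q)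
      (hc : Continuous f) (s) (hs : ∀ p, f (s p) = p) :
      MeasurePreserving f (μ.prod (μ.prod μ)) (μ.prod (μ.prod μ)) :=
    mp_of_hom _ _ f hmul hc s hs
  have m32 (f : (ι → Circle) × (ι → Circle) × (ι → Circle) → (ι → Circle) × (ι → Circle)) (hmul : ∀ p q, f (p * q) = f p * f q)
      (hc : Continuous f) (s) (hs : ∀ p, f (s p) = p) :
      MeasurePreserving f (μ.prod (μ.prod μ)) (μ.prod μ) :=
    mp_of_hom _ _ f hmul hc s hs
  have hA1 := (m33 (fun p => (p.1, p.2.2, p.2.1)) (fun p q => rfl) (by fun_prop)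
    (fun p => (p.1, p.2.2, p.2.1)) (fun p => rfl)).quasiMeasurePreserving.ae hA0
  have F1 : ∀ᵐ p ∂(μ.prod (μ.prod μ)), W (x0, p.1, p.2.1) * W (x0, p.1 * p.2.1, p.2.2)
      = W (x0, p.1, p.2.2) * W (x0, p.1 * p.2.2, p.2.1) := by
    filter_upwards [hA0, hA1, hs40] with p h1 h2 h3
    exact cg_aux4 h1 h2 h3
  have F1' := (m33 (fun p => (p.2.1, p.2.2, p.1)) (fun p q => rfl) (by fun_prop)
    (fun p => (p.2.2, p.1, p.2.1)) (fun p => rfl)).quasiMeasurePreserving.ae F1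
  have F2a := (m32 (fun p => (p.1, p.2.1 * p.2.2)) (fun p q => by ext <;> simp [mul_mul_mul_comm])
    (by fun_prop) (fun p => (p.1, p.2, 1)) (fun p => by simp)).quasiMeasurePreserving.ae hs0
  have F2b := (m32 (fun p => (p.1, p.2.1)) (fun p q => rfl)
    (by fun_prop) (fun p => (p.1, p.2, 1)) (fun p => rfl)).quasiMeasurePreserving.ae hs0
  have hQ : ∀ᵐ p ∂(μ.prod (μ.prod μ)),
      W (x0, p.1, p.2.1) * W (x0, p.1 * p.2.1, p.2.2)
        = W (x0, p.2.1, p.2.2) * W (x0, p.1, p.2.1 * p.2.2) := by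
    filter_upwards [F1', F2a, F2b] with p h1 h2 h3
    rw [h2, h3, h1, mul_comm p.2.1 p.1]
  obtain ⟨v, hv, hv2⟩ := gelfand_main μ (U := fun x r => W (x0, x, r))
    (hW.comp (by fun_prop)) hQ hs0
  have V1 := (m32 (fun p => (p.1 * p.2.1, p.2.2)) (fun p q => by ext <;> simp [mul_mul_mul_comm])
    (by fun_prop) (fun p => (p.1, 1, p.2)) (fun p => by simp)).quasiMeasurePreserving.ae hv2
  have V2 := (m32 (fun p => (p.1, p.2.2)) (fun p q => rfl)
    (by fun_prop) (fun p => (p.1, 1, p.2)) (fun p => rfl)).quasiMeasurePreserving.ae hv2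
  have fin1 : ∀ᵐ p ∂(μ.prod (μ.prod μ)), W (x0 * p.1, p.2.1, p.2.2) = D3 v p := by
    filter_upwards [hA0, V1, V2] with p h1 h2 h3
    exact cg_aux5 h1 h2 h3
  refine ⟨fun x => v (x0⁻¹ * x), hv.comp (by fun_prop), ?_⟩
  have := ((measurePreserving_mul_left μ x0⁻¹).prod
    (MeasurePreserving.id (μ.prod μ))).quasiMeasurePreserving.ae fin1
  filter_upwards [this] with p h
  simp only [Prod.map, id, mul_inv_cancel_left] at h
  refine h.trans ?_
  simp only [D3, mul_assoc]

end W1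


theorem shift_inv_eq {G K : Type} [Group G] (g : G) (x : G → K) :
    bernoulliShift G K g⁻¹ x = fun h => x (g * h) := by
  funext h
  simp [bernoulliShift]

section Erg
variable {G : Type} [Group G] [Countable G] [Infinite G]
variable (μ : Measure (G → Circle)) [IsProbabilityMeasure μ] [μ.IsHaarMeasure]

/-- diagonal inverse shift on triples -/
def sh3 {G K : Type} [Group G] (g : G) (p : (G → K) × (G → K) × (G → K)) :
    (G → K) × (G → K) × (G → K) :=
  (bernoulliShift G K g⁻¹ p.1, bernoulliShift G K g⁻¹ p.2.1, bernoulliShift G K g⁻¹ p.2.2)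

/-- diagonal inverse shift on quadruples -/
def sh4 {G K : Type} [Group G] (g : G) (p : (G → K) × (G → K) × (G → K) × (G → K)) :
    (G → K) × (G → K) × (G → K) × (G → K) :=
  (bernoulliShift G K g⁻¹ p.1, sh3 g p.2)

theorem erg4 {V : (G → Circle) × (G → Circle) × (G → Circle) × (G → Circle) → Circle}
    (hV : Measurable V) (lam : G → Circle)
    (h : ∀ g, ∀ᵐ p ∂(μ.prod (μ.prod (μ.prod μ))), V (sh4 g p) = lam g * V p) :
    ∃ c, ∀ᵐ p ∂(μ.prod (μ.prod (μ.prod μ))), V p = c := by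
  have i2 : (μ.prod μ).IsHaarMeasure := inferInstance
  have i3 : (μ.prod (μ.prod μ)).IsHaarMeasure := Measure.prod.instIsHaarMeasure _ _
  have i4 : (μ.prod (μ.prod (μ.prod μ))).IsHaarMeasure := Measure.prod.instIsHaarMeasure _ _
  let M : Measure ((G ⊕ G ⊕ G ⊕ G) → Circle) := Measure.haarMeasure ⊤
  have hM : IsProbabilityMeasure M := ⟨Measure.haarMeasure_self (K₀ := ⊤)⟩
  have hM' : M.IsHaarMeasure := Measure.isHaarMeasure_haarMeasure _
  let T : ((G ⊕ G ⊕ G ⊕ G) → Circle) →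
      (G → Circle) × (G → Circle) × (G → Circle) × (G → Circle) :=
    fun z => (fun h => z (.inl h), fun h => z (.inr (.inl h)), fun h => z (.inr (.inr (.inl h))),
      fun h => z (.inr (.inr (.inr h))))
  let S : (G → Circle) × (G → Circle) × (G → Circle) × (G → Circle) →
      ((G ⊕ G ⊕ G ⊕ G) → Circle) :=
    fun p => Sum.elim p.1 (Sum.elim p.2.1 (Sum.elim p.2.2.1 p.2.2.2))
  have hTS : ∀ p, T (S p) = p := fun p => rfl
  have hST : ∀ z, S (T z) = z := by
    intro z
    funext i
    rcases i with i | i | i | i <;> rfl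
  have hTc : Continuous T := by fun_prop
  have hT : MeasurePreserving T M (μ.prod (μ.prod (μ.prod μ))) :=
    mp_of_hom _ _ T (fun _ _ => rfl) hTc S hTS
  have hS : MeasurePreserving S (μ.prod (μ.prod (μ.prod μ))) M := by
    refine mp_of_hom _ _ S ?_ ?_ T hST
    · intro p q
      funext i
      rcases i with i | i | i | i <;> rfl
    · refine continuous_pi fun i => ?_
      rcases i with i | i | i | i <;> simp only [S, Sum.elim_inl, Sum.elim_inr] <;> fun_prop
  have hfin : ∀ i j : G ⊕ G ⊕ G ⊕ G, {g : G | g • i = j}.Finite := by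
    intro i j
    apply Set.Subsingleton.finite
    intro g hg g' hg'
    simp only [Set.mem_setOf_eq] at hg hg'
    rw [← hg'] at hg
    rcases i with i | i | i | i <;> simpa using hg
  obtain ⟨c, hc⟩ := eigen_const (ι := G ⊕ G ⊕ G ⊕ G) (G := G) hfin M (W := fun z => V (T z)) (hV.comp hTc.measurable) lam
    (by
      intro g
      have := hT.quasiMeasurePreserving.ae (h g)
      filter_upwards [this] with z hz
      rw [← hz]
      congr 1
      simp only [sh4, sh3, shift_inv_eq]
      rfl)
  refine ⟨c, ?_⟩
  have := hS.quasiMeasurePreserving.ae hc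
  filter_upwards [this] with p hp
  rwa [hTS] at hp

theorem superrigid3 (hG : InClassG G) (ν : Measure Circle) [IsProbabilityMeasure ν]
    [ν.IsHaarMeasure]
    (C : G → (G → Circle) × (G → Circle) × (G → Circle) → Circle)
    (hC : ∀ g, Measurable (C g))
    (h : ∀ g h, ∀ᵐ p ∂(μ.prod (μ.prod μ)), C (g * h) p = C g p * C h (sh3 g p)) :
    ∃ (lam : G →* Circle) (W : (G → Circle) × (G → Circle) × (G → Circle) → Circle),
      Measurable W ∧ ∀ g, ∀ᵐ p ∂(μ.prod (μ.prod μ)),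
        C g p = lam g * (W (sh3 g p) * (W p)⁻¹) := by
  have i2 : (μ.prod μ).IsHaarMeasure := inferInstance
  have i3 : (μ.prod (μ.prod μ)).IsHaarMeasure := Measure.prod.instIsHaarMeasure _ _
  have j3 : (ν.prod (ν.prod ν)).IsHaarMeasure := Measure.prod.instIsHaarMeasure _ _
  let M : Measure (G → Circle × Circle × Circle) :=
    Measure.infinitePi (fun _ => ν.prod (ν.prod ν))
  have hM : IsProbabilityMeasure M := inferInstance
  have hB : IsBernoulliMeasure (ν.prod (ν.prod ν)) M := by
    intro s t ht
    exact Measure.infinitePi_pi _ (fun i _ => ht i)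
  have hM' : M.IsHaarMeasure := haar_of_bernoulli _ M hB
  let T : (G → Circle × Circle × Circle) → (G → Circle) × (G → Circle) × (G → Circle) :=
    fun z => (fun h => (z h).1, fun h => (z h).2.1, fun h => (z h).2.2)
  let S : (G → Circle) × (G → Circle) × (G → Circle) → (G → Circle × Circle × Circle) :=
    fun p h => (p.1 h, p.2.1 h, p.2.2 h)
  have hTc : Continuous T := by fun_prop
  have hSc : Continuous S := by fun_prop
  have hT : MeasurePreserving T M (μ.prod (μ.prod μ)) :=
    mp_of_hom _ _ T (fun _ _ => rfl) hTc S (fun _ => rfl)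
  have hS : MeasurePreserving S (μ.prod (μ.prod μ)) M :=
    mp_of_hom _ _ S (fun _ _ => rfl) hSc T (fun _ => rfl)
  have hsh : ∀ g z, T (bernoulliShift G _ g⁻¹ z) = sh3 g (T z) := fun _ _ => rfl
  have hsh' : ∀ g p, S (sh3 g p) = bernoulliShift G _ g⁻¹ (S p) := fun _ _ => rfl
  obtain ⟨lam, b, hb, hlam⟩ := hG (Circle × Circle × Circle) (ν.prod (ν.prod ν)) M hB
    (fun g z => C g (T z))
    ⟨fun g => (hC g).comp hTc.measurable, fun g h' => by
      filter_upwards [hT.quasiMeasurePreserving.ae (h g h')] with z hz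
      exact hz⟩
  refine ⟨lam, fun p => b (S p), hb.comp hSc.measurable, fun g => ?_⟩
  filter_upwards [hS.quasiMeasurePreserving.ae (hlam g)] with p hp
  exact hp

end Erg


theorem ag1 {A : Type*} [AddCommGroup A] {t x0 x1 x2 x3 u0 u1 u2 u3 w0 w1 w2 w3 z0 z1 z2 z3 : A}
    (h0 : x0 = t + (u0 + -w0 + z0)) (h1 : x1 = t + (u1 + -w1 + z1))
    (h2 : x2 = t + (u2 + -w2 + z2)) (h3 : x3 = t + (u3 + -w3 + z3))
    (hx : x1 + x2 + -x0 + -x3 = 0) :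
    w1 + w2 + -w0 + -w3 = (z1 + z2 + -z0 + -z3) + (u1 + u2 + -u0 + -u3) := by
  subst h0 h1 h2 h3
  have : (z1 + z2 + -z0 + -z3) + (u1 + u2 + -u0 + -u3) - (w1 + w2 + -w0 + -w3) = 0 := by
    rw [← hx]; abel
  exact (sub_eq_zero.1 this).symm

theorem mg1 {M : Type*} [CommGroup M] {t x0 x1 x2 x3 u0 u1 u2 u3 w0 w1 w2 w3 z0 z1 z2 z3 : M}
    (h0 : x0 = t * (u0 * w0⁻¹ * z0)) (h1 : x1 = t * (u1 * w1⁻¹ * z1))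
    (h2 : x2 = t * (u2 * w2⁻¹ * z2)) (h3 : x3 = t * (u3 * w3⁻¹ * z3))
    (hx : x1 * x2 * x0⁻¹ * x3⁻¹ = 1) :
    w1 * w2 * w0⁻¹ * w3⁻¹ = (z1 * z2 * z0⁻¹ * z3⁻¹) * (u1 * u2 * u0⁻¹ * u3⁻¹) :=
  ag1 (A := Additive M) h0 h1 h2 h3 hx

theorem ag2 {A : Type*} [AddCommGroup A] {l a b c a' b' c' p q r : A}
    (h1 : p = l + (a' + -a)) (h2 : q = l + (b' + -b)) (h3 : r = l + (c' + -c))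
    (h : p + q = r) : a' + b' + -c' = -l + (a + b + -c) := by
  subst h1 h2 h3
  have : a' + b' + -c' - (-l + (a + b + -c)) = 0 := by
    rw [← sub_eq_zero] at h
    rw [← h]; abel
  exact (sub_eq_zero.1 this)

theorem mg2 {M : Type*} [CommGroup M] {l a b c a' b' c' p q r : M}
    (h1 : p = l * (a' * a⁻¹)) (h2 : q = l * (b' * b⁻¹)) (h3 : r = l * (c' * c⁻¹))
    (h : p * q = r) : a' * b' * c'⁻¹ = l⁻¹ * (a * b * c⁻¹) :=
  ag2 (A := Additive M) h1 h2 h3 h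

theorem ag3 {A : Type*} [AddCommGroup A] (a b c d e f : A) :
    (a + b + -c + -d) + (e + d + -a + -f) = e + b + -c + -f := by abel

theorem mg3 {M : Type*} [CommGroup M] (a b c d e f : M) :
    (a * b * c⁻¹ * d⁻¹) * (e * d * a⁻¹ * f⁻¹) = e * b * c⁻¹ * f⁻¹ :=
  ag3 (A := Additive M) a b c d e f

theorem ag4 {A : Type*} [AddCommGroup A] {l a b a' b' p : A}
    (h1 : p = l + (a' + -a)) (h2 : p = l + (b' + -b)) : a' + -b' = 0 + (a + -b) := by
  rw [h1, ← sub_eq_zero] at h2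
  have : a' + -b' - (0 + (a + -b)) = 0 := by
    refine Eq.trans ?_ h2
    abel
  exact sub_eq_zero.1 this

theorem mg4 {M : Type*} [CommGroup M] {l a b a' b' p : M}
    (h1 : p = l * (a' * a⁻¹)) (h2 : p = l * (b' * b⁻¹)) : a' * b'⁻¹ = 1 * (a * b⁻¹) :=
  ag4 (A := Additive M) h1 h2

theorem ag5 {A : Type*} [AddCommGroup A] (a b c : A) :
    (a + b) + (a + c) + -a + -(a + b + c) = 0 := by abel

theorem mg5 {M : Type*} [CommGroup M] (a b c : M) :
    (a * b) * (a * c) * a⁻¹ * (a * b * c)⁻¹ = 1 :=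
  ag5 (A := Additive M) a b c

theorem mg6 {M : Type*} [CommGroup M] (a b c a' b' c' : M) :
    (a * a') * (b * b') * (c * c') = (a * b * c) * (a' * b' * c') := by ac_rfl

theorem shift_shift {G K : Type} [Group G] (g : G) (x : G → K) :
    bernoulliShift G K g⁻¹ (bernoulliShift G K g x) = x := by
  funext h
  simp [bernoulliShift]

section D
variable {X : Type} [CommGroup X]

theorem D3_add (f : X → Circle) (x y z r : X) :
    D3 f (x, y, r) * D3 f (x * y, z, r) = D3 f (x, y * z, r) := by
  simp only [D3]
  rw [← mul_assoc x y z]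
  exact mg3 (f (x * y)) (f (x * r)) (f x) (f (x * y * r)) (f (x * y * z)) (f (x * y * z * r))

theorem D3_symm (f : X → Circle) (x y r : X) : D3 f (x, y, r) = D3 f (x, r, y) := by
  simp only [D3, mul_right_comm x y r, mul_comm (f (x * y))]

end D

section C
variable {G : Type} [Group G] [Countable G] [Infinite G]
variable (μ : Measure (G → Circle)) [IsProbabilityMeasure μ] [μ.IsHaarMeasure]

theorem D3_meas {f : (G → Circle) → Circle} (hf : Measurable f) : Measurable (D3 f) := by
  unfold D3
  exact (((hf.comp (by fun_prop)).mul (hf.comp (by fun_prop))).mul (hf.comp (by fun_prop)).inv).mul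
    (hf.comp (by fun_prop)).inv

theorem D3_cocycle (c : G → G → (G →₀ ℤ)) (θ : G → G → Circle) (b : G → (G → Circle) → Circle)
    (h : ∀ g h : G, ∀ᵐ x ∂μ, chr (c g h) x =
      θ g h * (b h (bernoulliShift G Circle g⁻¹ x) * (b (g * h) x)⁻¹ * b g x)) (g k : G) :
    ∀ᵐ p ∂(μ.prod (μ.prod μ)), D3 (b (g * k)) p = D3 (b g) p * D3 (b k) (sh3 g p) := by
  have i2 : (μ.prod μ).IsHaarMeasure := inferInstance
  have i3 : (μ.prod (μ.prod μ)).IsHaarMeasure := Measure.prod.instIsHaarMeasure _ _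
  have m31 (f : (G → Circle) × (G → Circle) × (G → Circle) → (G → Circle)) (hmul : ∀ p q, f (p * q) = f p * f q)
      (hc : Continuous f) (s) (hs : ∀ p, f (s p) = p) :
      MeasurePreserving f (μ.prod (μ.prod μ)) μ :=
    mp_of_hom _ _ f hmul hc s hs
  have r0 := (m31 (fun p => p.1) (fun p q => rfl) (by fun_prop)
    (fun x => (x, 1, 1)) (fun x => rfl)).quasiMeasurePreserving.ae (h g k)
  have r1 := (m31 (fun p => p.1 * p.2.1) (fun p q => mul_mul_mul_comm _ _ _ _) (by fun_prop)
    (fun x => (x, 1, 1)) (fun x => mul_one x)).quasiMeasurePreserving.ae (h g k)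
  have r2 := (m31 (fun p => p.1 * p.2.2) (fun p q => mul_mul_mul_comm _ _ _ _) (by fun_prop)
    (fun x => (x, 1, 1)) (fun x => mul_one x)).quasiMeasurePreserving.ae (h g k)
  have r3 := (m31 (fun p => p.1 * p.2.1 * p.2.2)
    (fun p q => by simp only [Prod.fst_mul, Prod.snd_mul]; exact mg6 _ _ _ _ _ _) (by fun_prop)
    (fun x => (x, 1, 1)) (fun x => by simp)).quasiMeasurePreserving.ae (h g k)
  filter_upwards [r0, r1, r2, r3] with p h0 h1 h2 h3
  refine mg1 h0 h1 h2 h3 ?_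
  simp only [chr_mul]
  exact mg5 _ _ _

theorem erg3 {V : (G → Circle) × (G → Circle) × (G → Circle) → Circle}
    (hV : Measurable V) (lam : G → Circle)
    (h : ∀ g, ∀ᵐ p ∂(μ.prod (μ.prod μ)), V (sh3 g p) = lam g * V p) :
    ∃ c, ∀ᵐ p ∂(μ.prod (μ.prod μ)), V p = c := by
  obtain ⟨c, hc⟩ := erg4 μ (V := fun p => V p.2) (hV.comp measurable_snd) lam (fun g =>
    (Measure.quasiMeasurePreserving_snd (μ := μ) (ν := μ.prod (μ.prod μ))).ae (h g))
  obtain ⟨x, hx⟩ := (Measure.ae_ae_of_ae_prod hc).exists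
  exact ⟨c, hx⟩

theorem lemmaC (C : G → (G → Circle) → Circle) (lam : G →* Circle)
    {W : (G → Circle) × (G → Circle) × (G → Circle) → Circle} (hW : Measurable W)
    (h : ∀ g, ∀ᵐ p ∂(μ.prod (μ.prod μ)), D3 (C g) p = lam g * (W (sh3 g p) * (W p)⁻¹)) :
    ∃ v : (G → Circle) → Circle, Measurable v ∧
      ∀ g, ∀ᵐ p ∂(μ.prod (μ.prod μ)), D3 (C g) p = D3 v (sh3 g p) * (D3 v p)⁻¹ := by
  have i2 : (μ.prod μ).IsHaarMeasure := inferInstance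
  have i3 : (μ.prod (μ.prod μ)).IsHaarMeasure := Measure.prod.instIsHaarMeasure _ _
  have i4 : (μ.prod (μ.prod (μ.prod μ))).IsHaarMeasure := Measure.prod.instIsHaarMeasure _ _
  have m43 (f : (G → Circle) × (G → Circle) × (G → Circle) × (G → Circle) → (G → Circle) × (G → Circle) × (G → Circle)) (hmul : ∀ p q, f (p * q) = f p * f q)
      (hc : Continuous f) (s) (hs : ∀ p, f (s p) = p) :
      MeasurePreserving f (μ.prod (μ.prod (μ.prod μ))) (μ.prod (μ.prod μ)) :=
    mp_of_hom _ _ f hmul hc s hs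
  have key : ∀ g, ∀ᵐ p ∂(μ.prod (μ.prod (μ.prod μ))),
      W ((sh4 g p).1, (sh4 g p).2.1, (sh4 g p).2.2.2)
        * W ((sh4 g p).1 * (sh4 g p).2.1, (sh4 g p).2.2.1, (sh4 g p).2.2.2)
        * (W ((sh4 g p).1, (sh4 g p).2.1 * (sh4 g p).2.2.1, (sh4 g p).2.2.2))⁻¹
      = (lam g)⁻¹ * (W (p.1, p.2.1, p.2.2.2) * W (p.1 * p.2.1, p.2.2.1, p.2.2.2)
        * (W (p.1, p.2.1 * p.2.2.1, p.2.2.2))⁻¹) := by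
    intro g
    have s1 := (m43 (fun p => (p.1, p.2.1, p.2.2.2)) (fun p q => rfl) (by fun_prop)
      (fun p => (p.1, p.2.1, 1, p.2.2)) (fun p => rfl)).quasiMeasurePreserving.ae (h g)
    have s2 := (m43 (fun p => (p.1 * p.2.1, p.2.2.1, p.2.2.2))
      (fun p q => by ext <;> simp [mul_mul_mul_comm]) (by fun_prop)
      (fun p => (p.1, 1, p.2.1, p.2.2)) (fun p => by simp)).quasiMeasurePreserving.ae (h g)
    have s3 := (m43 (fun p => (p.1, p.2.1 * p.2.2.1, p.2.2.2))
      (fun p q => by ext <;> simp [mul_mul_mul_comm]) (by fun_prop)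
      (fun p => (p.1, 1, p.2.1, p.2.2)) (fun p => by simp)).quasiMeasurePreserving.ae (h g)
    filter_upwards [s1, s2, s3] with p h1 h2 h3
    exact mg2 h1 h2 h3 (D3_add _ _ _ _ _)
  have hVm : Measurable fun p : (G → Circle) × (G → Circle) × (G → Circle) × (G → Circle) =>
      W (p.1, p.2.1, p.2.2.2) * W (p.1 * p.2.1, p.2.2.1, p.2.2.2)
        * (W (p.1, p.2.1 * p.2.2.1, p.2.2.2))⁻¹ :=
    ((hW.comp (by fun_prop)).mul (hW.comp (by fun_prop))).mul (hW.comp (by fun_prop)).inv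
  obtain ⟨κ, hκ⟩ := erg4 μ hVm (fun g => (lam g)⁻¹) key
  have hlam : ∀ g, lam g = 1 := by
    intro g
    have m : MeasurePreserving (sh4 (K := Circle) g) (μ.prod (μ.prod (μ.prod μ)))
        (μ.prod (μ.prod (μ.prod μ))) := by
      refine mp_of_hom _ _ _ (fun _ _ => rfl) ?_ (sh4 g⁻¹) ?_
      · unfold sh4 sh3 bernoulliShift
        fun_prop
      · intro p
        simp [sh4, sh3, shift_shift]
    obtain ⟨p, h1, h2, h3⟩ := (hκ.and ((m.quasiMeasurePreserving.ae hκ).and (key g))).exists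
    rw [h1, h2] at h3
    have : (lam g)⁻¹ = 1 := by
      apply mul_right_cancel (b := κ)
      rw [← h3, one_mul]
    simpa using this
  -- normalise
  let W' : (G → Circle) × (G → Circle) × (G → Circle) → Circle := fun p => W p * κ⁻¹
  have hA : ∀ᵐ p ∂(μ.prod (μ.prod (μ.prod μ))),
      W' (p.1, p.2.1, p.2.2.2) * W' (p.1 * p.2.1, p.2.2.1, p.2.2.2)
        = W' (p.1, p.2.1 * p.2.2.1, p.2.2.2) := by
    filter_upwards [hκ] with p hp
    have e := mul_inv_eq_iff_eq_mul.1 hp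
    simp only [W']
    rw [mul_mul_mul_comm, e, mul_comm κ, mul_mul_mul_comm, mul_inv_cancel, mul_one]
  have hs0 : ∀ g, ∀ᵐ p ∂(μ.prod (μ.prod μ)),
      W ((sh3 g p).1, (sh3 g p).2.1, (sh3 g p).2.2) *
        (W ((sh3 g p).1, (sh3 g p).2.2, (sh3 g p).2.1))⁻¹ =
      1 * (W (p.1, p.2.1, p.2.2) * (W (p.1, p.2.2, p.2.1))⁻¹) := by
    intro g
    have s := (mp_of_hom (μ.prod (μ.prod μ)) (μ.prod (μ.prod μ)) (fun p => (p.1, p.2.2, p.2.1))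
      (fun p q => rfl) (by fun_prop)
      (fun p => (p.1, p.2.2, p.2.1)) (fun p => rfl)).quasiMeasurePreserving.ae (h g)
    filter_upwards [h g, s] with p h1 h2
    exact mg4 h1 ((D3_symm _ _ _ _).trans h2)
  obtain ⟨k, hk⟩ := erg3 μ (V := fun p => W (p.1, p.2.1, p.2.2) * (W (p.1, p.2.2, p.2.1))⁻¹)
    ((hW.comp (by fun_prop)).mul (hW.comp (by fun_prop)).inv) (fun _ => 1) hs0
  have hs1 : ∀ᵐ p ∂(μ.prod (μ.prod μ)), W' (p.1, p.2.1, p.2.2) = k * W' (p.1, p.2.2, p.2.1) := by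
    filter_upwards [hk] with p hp
    have e := mul_inv_eq_iff_eq_mul.1 hp
    simp only [W']
    rw [← mul_assoc, ← e]
  have hk1 : k = 1 := kappa_one μ hA hs1
  obtain ⟨v, hv, hv2⟩ := lemmaE μ (W := W') (hW.mul_const _) hA (by
    filter_upwards [hs1] with p hp
    rw [hp, hk1, one_mul])
  refine ⟨v, hv, fun g => ?_⟩
  have m : MeasurePreserving (sh3 (K := Circle) g) (μ.prod (μ.prod μ)) (μ.prod (μ.prod μ)) := by
    refine mp_of_hom _ _ _ (fun _ _ => rfl) ?_ (sh3 g⁻¹) ?_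
    · unfold sh3 bernoulliShift
      fun_prop
    · intro p
      simp [sh3, shift_shift]
  filter_upwards [h g, hv2, m.quasiMeasurePreserving.ae hv2] with p h1 h2 h3
  rw [← h2, ← h3, h1, hlam g, one_mul]
  simp [W', mul_assoc]

end C


theorem ag7 {A : Type*} [AddCommGroup A] {b0 b1 b2 b3 v0 v1 v2 v3 u0 u1 u2 u3 : A}
    (h : b1 + b2 + -b0 + -b3 = (u1 + u2 + -u0 + -u3) + -(v1 + v2 + -v0 + -v3)) :
    (b1 + v1 + -u1) + (b2 + v2 + -u2) = (b0 + v0 + -u0) + (b3 + v3 + -u3) := by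
  rw [← sub_eq_zero] at h ⊢
  refine Eq.trans ?_ h
  abel

theorem mg7 {M : Type*} [CommGroup M] {b0 b1 b2 b3 v0 v1 v2 v3 u0 u1 u2 u3 : M}
    (h : b1 * b2 * b0⁻¹ * b3⁻¹ = (u1 * u2 * u0⁻¹ * u3⁻¹) * (v1 * v2 * v0⁻¹ * v3⁻¹)⁻¹) :
    (b1 * v1 * u1⁻¹) * (b2 * v2 * u2⁻¹) = (b0 * v0 * u0⁻¹) * (b3 * v3 * u3⁻¹) :=
  ag7 (A := Additive M) h

theorem ag8 {A : Type*} [AddCommGroup A] {x t b1 b2 b3 v w z r1 r2 r3 k1 k2 k3 : A}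
    (h : x = t + (b1 + -b2 + b3)) (h1 : b1 + w + -z = r1 + k1) (h2 : b2 + v + -z = r2 + k2)
    (h3 : b3 + v + -w = r3 + k3) : x = (t + r1 + -r2 + r3) + (k1 + -k2 + k3) := by
  have e1 : b1 = r1 + k1 + z - w := by rw [← h1]; abel
  have e2 : b2 = r2 + k2 + z - v := by rw [← h2]; abel
  have e3 : b3 = r3 + k3 + w - v := by rw [← h3]; abel
  rw [h, e1, e2, e3]
  abel

theorem mg8 {M : Type*} [CommGroup M] {x t b1 b2 b3 v w z r1 r2 r3 k1 k2 k3 : M}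
    (h : x = t * (b1 * b2⁻¹ * b3)) (h1 : b1 * w * z⁻¹ = r1 * k1) (h2 : b2 * v * z⁻¹ = r2 * k2)
    (h3 : b3 * v * w⁻¹ = r3 * k3) : x = (t * r1 * r2⁻¹ * r3) * (k1 * k2⁻¹ * k3) :=
  ag8 (A := Additive M) h h1 h2 h3

section F
variable {G : Type} [Group G] [Countable G] [Infinite G]
variable (μ : Measure (G → Circle)) [IsProbabilityMeasure μ] [μ.IsHaarMeasure]

theorem main_cocycle (hG : InClassG G) (ν : Measure Circle) [IsProbabilityMeasure ν]
    [ν.IsHaarMeasure] (c : G → G → (G →₀ ℤ)) (θ : G → G → Circle)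
    (b : G → (G → Circle) → Circle) (hb : ∀ g, Measurable (b g))
    (h : ∀ g h : G, ∀ᵐ x ∂μ, chr (c g h) x =
      θ g h * (b h (bernoulliShift G Circle g⁻¹ x) * (b (g * h) x)⁻¹ * b g x)) :
    ∃ n : G → (G →₀ ℤ), ∀ g h, c g h = (n h).mapDomain (g * ·) - n (g * h) + n g := by
  have i2 : (μ.prod μ).IsHaarMeasure := inferInstance
  have i3 : (μ.prod (μ.prod μ)).IsHaarMeasure := Measure.prod.instIsHaarMeasure _ _
  obtain ⟨lam, W, hW, hWl⟩ := superrigid3 μ hG ν (fun g => D3 (b g)) (fun g => D3_meas (hb g))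
    (D3_cocycle μ c θ b h)
  obtain ⟨v, hv, hv2⟩ := lemmaC μ b lam hW hWl
  have mS : ∀ g, MeasurePreserving (bernoulliShift G Circle g⁻¹) μ μ := by
    intro g
    refine mp_of_hom _ _ _ (fun _ _ => rfl) ?_ (bernoulliShift G Circle g) (shift_shift g)
    unfold bernoulliShift
    fun_prop
  have hbn : ∀ g, ∃ (r : Circle) (n : G →₀ ℤ), ∀ᵐ x ∂μ,
      b g x * v x * (v (bernoulliShift G Circle g⁻¹ x))⁻¹ = r * chr n x := by
    intro g
    refine affine_const μ (((hb g).mul hv).mul (hv.comp (mS g).measurable).inv) ?_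
    filter_upwards [Measure.ae_ae_of_ae_prod (hv2 g)] with x hx
    filter_upwards [Measure.ae_ae_of_ae_prod hx] with r hr
    filter_upwards [hr] with y hy
    have := mg7 hy
    simp only at this
    rw [mul_comm, mul_right_comm x y r]
    exact this
  choose r n hn using hbn
  refine ⟨n, fun g k => ?_⟩
  apply chr_unique μ (θ g k * r k * (r (g * k))⁻¹ * r g)
  filter_upwards [h g k, (mS g).quasiMeasurePreserving.ae (hn k), hn (g * k), hn g] with x h0 h1 h2 h3
  rw [chr_add, chr_sub, chr_mapDomain, ← shift_inv_eq]
  have e : bernoulliShift G Circle k⁻¹ (bernoulliShift G Circle g⁻¹ x)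
      = bernoulliShift G Circle (g * k)⁻¹ x := by
    funext h
    simp [bernoulliShift, mul_assoc]
  rw [e] at h1
  exact mg8 h0 h1 h2 h3

end F

open groupCohomology in
theorem main_thm
    (G : Type) [Group G] [Countable G] [Infinite G] (hG : InClassG G)
    (ν : Measure Circle) [IsProbabilityMeasure ν] [ν.IsHaarMeasure]
    (μ : Measure (G → Circle)) [IsProbabilityMeasure μ] (hμ : IsBernoulliMeasure ν μ)
    (hsurj : ∀ c : G → G → (G → Circle) → Circle,
      c ∈ measZ2 (bernoulliShift G Circle) μ → c ∈ measBPsi2 (bernoulliShift G Circle) μ) :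
    ∀ x : groupCohomology.H2 (Rep.ofMulAction ℤ G G), x = 0 := by
  have hH : μ.IsHaarMeasure := haar_of_bernoulli ν μ hμ
  intro x
  induction x using H2_induction_on with
  | h f =>
  rw [H2π_eq_zero_iff]
  have hf := (mem_cocycles₂_iff (A := Rep.ofMulAction ℤ G G) f).1 f.2
  let c : G → G → (G →₀ ℤ) := fun g h => MonoidAlgebra.coeff (f (g, h))
  have hρ : ∀ (g : G) (a : MonoidAlgebra ℤ G),
      MonoidAlgebra.coeff ((Representation.ofMulAction ℤ G G) g a) = (MonoidAlgebra.coeff a).mapDomain (g * ·) := by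
    intro g a
    rfl
  have hc : ∀ g h j, c (g * h) j + c g h = (c h j).mapDomain (g * ·) + c g (h * j) := by
    intro g h j
    have := congrArg MonoidAlgebra.coeff (hf g h j)
    exact this
  obtain ⟨θ, b, -, hb, hb2⟩ := hsurj (fun g h => chr (c g h)) (by
    refine ⟨fun g h => chr_measurable _, fun g h j => ae_of_all _ fun x => ?_⟩
    beta_reduce
    rw [shift_inv_eq, ← chr_mapDomain (g * ·), ← chr_sub, ← chr_add, ← chr_sub]
    have : Finsupp.mapDomain (g * ·) (c h j) - c (g * h) j + c g (h * j) - c g h = 0 := by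
      rw [eq_sub_of_add_eq (hc g h j)]
      abel
    rw [this, chr_zero])
  obtain ⟨n, hn⟩ := main_cocycle μ hG ν c θ b hb hb2
  refine ⟨fun g => MonoidAlgebra.ofCoeff (n g), ?_⟩
  funext p
  obtain ⟨g, h⟩ := p
  have := hn g h
  apply MonoidAlgebra.coeff_injective
  exact this.symm


/-- Let `G ∈ 𝒢` be countable infinite and consider the Bernoulli
shift `G ↷ (𝕋^G, ν^G)` where `ν` is the Haar probability measure on `𝕋`.  If the
natural map `Ψ₂ : H²(G, 𝕋) → H²(G ↷ 𝕋^G; 𝕋)` is surjective — i.e. every measurable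
2-cocycle is cohomologous to a constant-in-`x` group 2-cocycle — then `H²(G, ℤG) = 0`. -/
theorem h2_zg_trivial_of_psi2_surjective
    (G : Type) [Group G] [Countable G] [Infinite G] (hG : InClassG G)
    (ν : Measure Circle) [IsProbabilityMeasure ν] [ν.IsHaarMeasure]
    (μ : Measure (G → Circle)) [IsProbabilityMeasure μ] (hμ : IsBernoulliMeasure ν μ)
    (hsurj : ∀ c : G → G → (G → Circle) → Circle,
      c ∈ measZ2 (bernoulliShift G Circle) μ → c ∈ measBPsi2 (bernoulliShift G Circle) μ) :
    ∀ x : groupCohomology.H2 (Rep.ofMulAction ℤ G G), x = 0 :=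
  main_thm G hG ν μ hμ hsurj

end AlgActCohomology
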